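/- There exists a polynomial map f : ℝ² → ℝ² (both coordinate functions real polynomials in two variables, of degree at least 2) that has two disjoint period doubling Cantor attractors and a strange attractor. -/

import Mathlib

open Filter Set

/-- `f : ℝ² → ℝ²` is a polynomial map of degree at least 2. -/
def IsPolyMapDegTwo (f : ℝ × ℝ → ℝ × ℝ) : Prop :=
  ∃ P Q : MvPolynomial (Fin 2) ℝ,
    2 ≤ max P.totalDegree Q.totalDegree ∧
    ∀ p : ℝ × ℝ,
      f p = (MvPolynomial.eval ![p.1, p.2] P, MvPolynomial.eval ![p.1, p.2] Q)

/-- `A` is a period doubling Cantor attractor of `f`. -/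
def IsPDCantorAttractor (f : ℝ × ℝ → ℝ × ℝ) (A : Set (ℝ × ℝ)) : Prop :=
  IsCompact A ∧ f '' A = A ∧
    (∃ e : A ≃ₜ ℤ_[2], ∀ (x : A) (hx : f ↑x ∈ A), e ⟨f ↑x, hx⟩ = e x + 1) ∧
    ∃ U : Set (ℝ × ℝ), IsOpen U ∧ A ⊆ U ∧
      ∀ᵐ x ∂MeasureTheory.volume, x ∈ U →
        (omegaLimit atTop (fun n : ℕ => f^[n]) {x} ∩ A).Nonempty

/-- `Λ` is a strange attractor of `f`: the attractor of a trapping region `U`, containing a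
point `z` with dense forward orbit in `Λ` satisfying the Collet–Eckmann condition. -/
def IsStrangeAttractor (f : ℝ × ℝ → ℝ × ℝ) (Λ : Set (ℝ × ℝ)) : Prop :=
  ∃ U : Set (ℝ × ℝ), IsOpen U ∧ closure (f '' U) ⊆ U ∧
    Λ = ⋂ j : ℕ, f^[j] '' U ∧
    ∃ z ∈ Λ, Λ ⊆ closure (Set.range fun n : ℕ => f^[n] z) ∧
      ∃ v : ℝ × ℝ, v ≠ 0 ∧ ∃ κ : ℝ, 0 < κ ∧
        ∀ n : ℕ, 0 < n → Real.exp (κ * n) ≤ ‖fderiv ℝ f^[n] z v‖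

/-!
The map is a skew product `(x, y) ↦ (1 - r (1 - x²)², q_x y)`. For an infinitely renormalizable `r`
the quartic in the base has a 2-adic adding machine which is approached by almost every point near
it; the real bounds making its pieces shrink come from the expansion of cross-ratios by maps with
negative Schwarzian derivative. The `q_x` have two common fixed points `-t` and `1 + t`, and over
the adding machine they contract towards each of them, so it has two copies in the plane. Over the
superattracting fixed point `1` of the base, `q_1` is the band-merging quadratic
`y ↦ y² - t - t²`. Its return map to `[-t, t]` is expanding in the arcsine coordinate, and an
itinerary that is universal but approaches the endpoints `±t` only subexponentially fast gives a
Collet–Eckmann point whose orbit is dense in the invariant interval.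
-/

open Topology

/-! ### Cross-ratios -/

section CrossRatio

variable {𝕜 : Type*} [Field 𝕜]

/-- The cross-ratio of four points, normalised so that maps with negative Schwarzian derivative
increase it on `a < b < c < d`. -/
def crossRatio (a b c d : 𝕜) : 𝕜 := (d - a) * (c - b) / ((b - a) * (d - c))

lemma crossRatio_rev (a b c d : 𝕜) : crossRatio d c b a = crossRatio a b c d := by
  unfold crossRatio
  congr 1 <;> ring

lemma crossRatio_affine {m : 𝕜} (hm : m ≠ 0) (k a b c d : 𝕜) :
    crossRatio (m * a + k) (m * b + k) (m * c + k) (m * d + k) = crossRatio a b c d := by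
  unfold crossRatio
  rw [← mul_div_mul_left ((d - a) * (c - b)) _ (pow_ne_zero 2 hm)]
  congr 1 <;> ring

lemma crossRatio_neg (a b c d : 𝕜) : crossRatio (-a) (-b) (-c) (-d) = crossRatio a b c d := by
  simpa using crossRatio_affine (neg_ne_zero.mpr one_ne_zero) 0 a b c d

lemma crossRatio_eq {a b c d : 𝕜} (hab : a ≠ b) (hcd : c ≠ d) :
    crossRatio a b c d = (1 + (c - b) / (b - a)) * (1 + (c - b) / (d - c)) - 1 := by
  have := sub_ne_zero.mpr hab.symm
  have := sub_ne_zero.mpr hcd.symm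
  unfold crossRatio
  field_simp
  ring

variable [LinearOrder 𝕜]

/-- `f` is strictly monotone on `I` and does not decrease the cross-ratios of `I`. -/
structure IsExpandingLap (f : 𝕜 → 𝕜) (I : Set 𝕜) : Prop where
  strictMonoOn_or_strictAntiOn : StrictMonoOn f I ∨ StrictAntiOn f I
  crossRatio_le : ∀ ⦃a⦄, a ∈ I → ∀ ⦃b⦄, b ∈ I → ∀ ⦃c⦄, c ∈ I → ∀ ⦃d⦄, d ∈ I →
    a < b → b < c → c < d → crossRatio a b c d ≤ crossRatio (f a) (f b) (f c) (f d)

namespace IsExpandingLap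

variable {f g : 𝕜 → 𝕜} {I J : Set 𝕜}

lemma mono (hf : IsExpandingLap f J) (h : I ⊆ J) : IsExpandingLap f I :=
  ⟨hf.strictMonoOn_or_strictAntiOn.imp (·.mono h) (·.mono h), fun _ ha _ hb _ hc _ hd =>
    hf.crossRatio_le (h ha) (h hb) (h hc) (h hd)⟩

lemma crossRatio_le_comp (hg : IsExpandingLap g J) (hfI : MapsTo f I J)
    (hf : StrictMonoOn f I ∨ StrictAntiOn f I) {a b c d : 𝕜} (ha : a ∈ I) (hb : b ∈ I) (hc : c ∈ I)
    (hd : d ∈ I) (hab : a < b) (hbc : b < c) (hcd : c < d) :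
    crossRatio (f a) (f b) (f c) (f d) ≤
      crossRatio (g (f a)) (g (f b)) (g (f c)) (g (f d)) := by
  rcases hf with hf | hf
  · exact hg.crossRatio_le (hfI ha) (hfI hb) (hfI hc) (hfI hd)
      (hf ha hb hab) (hf hb hc hbc) (hf hc hd hcd)
  · rw [← crossRatio_rev, ← crossRatio_rev (g (f a))]
    exact hg.crossRatio_le (hfI hd) (hfI hc) (hfI hb) (hfI ha)
      (hf hc hd hcd) (hf hb hc hbc) (hf ha hb hab)

lemma comp (hg : IsExpandingLap g J) (hf : IsExpandingLap f I) (hfI : MapsTo f I J) :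
    IsExpandingLap (g ∘ f) I := by
  refine ⟨?_, fun a ha b hb c hc d hd hab hbc hcd =>
    (hf.crossRatio_le ha hb hc hd hab hbc hcd).trans
      (hg.crossRatio_le_comp hfI hf.strictMonoOn_or_strictAntiOn ha hb hc hd hab hbc hcd)⟩
  rcases hg.strictMonoOn_or_strictAntiOn with hg | hg <;>
    rcases hf.strictMonoOn_or_strictAntiOn with hf | hf
  · exact .inl (hg.comp hf hfI)
  · exact .inr (hg.comp_strictAntiOn hf hfI)
  · exact .inr (hg.comp_strictMonoOn hf hfI)
  · exact .inl (hg.comp hf hfI)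

end IsExpandingLap

variable [IsStrictOrderedRing 𝕜]

lemma crossRatio_lt_crossRatio {a a' b b' c d d' : 𝕜} (ha : a' < a) (hab : a < b) (hb : b ≤ b')
    (hbc : b' < c) (hcd : c < d) (hd : d ≤ d') :
    crossRatio a' b' c d' < crossRatio a b c d := by
  rw [crossRatio_eq (by grind) (by grind), crossRatio_eq hab.ne hcd.ne]
  have := sub_pos.mpr hbc
  have := sub_pos.mpr hab
  have := sub_pos.mpr hcd
  have := sub_pos.mpr (hcd.trans_le hd)
  have : 0 < c - b := by linarith
  have h₁ : (c - b') / (b' - a') < (c - b) / (b - a) :=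
    div_lt_div₀' (by linarith) (by linarith) (by linarith) (by linarith)
  have h₂ : (c - b') / (d' - c) ≤ (c - b) / (d - c) := by gcongr
  have h₃ : 0 < (c - b') / (d' - c) := by positivity
  have h₄ : 0 < (c - b') / (b' - a') := div_pos (by linarith) (by linarith)
  exact sub_lt_sub_right (mul_lt_mul (by linarith) (by linarith) (by linarith) (by linarith)) 1

lemma sub_le_mul_sub_of_crossRatio_le {a b c d θ : 𝕜} (hab : a < b) (hbc : b < c) (hcd : c < d)
    (h : crossRatio a b c d * (1 - θ) ^ 2 ≤ 4 * θ) : c - b ≤ θ * (d - a) := by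
  obtain ⟨x, hx⟩ : ∃ x, x = b - a := ⟨_, rfl⟩
  obtain ⟨y, hy⟩ : ∃ y, y = c - b := ⟨_, rfl⟩
  obtain ⟨z, hz⟩ : ∃ z, z = d - c := ⟨_, rfl⟩
  have hx0 : 0 < x := by linarith
  have hy0 : 0 < y := by linarith
  have hz0 : 0 < z := by linarith
  have hT : d - a = x + y + z := by linarith
  unfold crossRatio at h
  rw [hT, ← hx, ← hy, ← hz] at h
  rw [hT, ← hy]
  by_contra! hlt
  rw [div_mul_eq_mul_div, div_le_iff₀ (mul_pos hx0 hz0)] at h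
  have hθ : 0 ≤ θ := by
    by_contra! hθ
    have : 0 ≤ (x + y + z) * y * (1 - θ) ^ 2 := by positivity
    nlinarith [mul_pos hx0 hz0]
  have hxz : x + z < (1 - θ) * (x + y + z) := by linarith
  have hsq : (x + z) ^ 2 < ((1 - θ) * (x + y + z)) ^ 2 := by gcongr
  have h₁ : 4 * θ * (x * z) ≤ θ * (x + z) ^ 2 := by nlinarith [sq_nonneg (x - z)]
  have h₂ : θ * (x + y + z) * ((1 - θ) ^ 2 * (x + y + z)) <
      y * ((1 - θ) ^ 2 * (x + y + z)) := by
    have : 0 < (1 - θ) ^ 2 * (x + y + z) := by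
      have : 0 < 1 - θ := by
        by_contra! h
        nlinarith
      positivity
    gcongr
  nlinarith

lemma crossRatio_le_crossRatio_sq {a b c d : 𝕜} (ha : 0 ≤ a) (hab : a < b) (hbc : b < c)
    (hcd : c < d) : crossRatio a b c d ≤ crossRatio (a ^ 2) (b ^ 2) (c ^ 2) (d ^ 2) := by
  have hpos : 0 < (b + a) * (d + c) := mul_pos (by linarith) (by linarith)
  have hfactor : crossRatio (a ^ 2) (b ^ 2) (c ^ 2) (d ^ 2) =
      crossRatio a b c d * ((d + a) * (c + b) / ((b + a) * (d + c))) := by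
    unfold crossRatio
    rw [div_mul_div_comm]
    congr 1 <;> ring
  have hcr : 0 ≤ crossRatio a b c d := div_nonneg
    (mul_nonneg (by linarith) (by linarith)) (mul_nonneg (by linarith) (by linarith))
  rw [hfactor]
  refine le_mul_of_one_le_right hcr ((one_le_div hpos).mpr ?_)
  nlinarith [mul_pos (sub_pos.mpr hbc) (by linarith : 0 < d - a)]

namespace IsExpandingLap

variable {f g : 𝕜 → 𝕜} {I : Set 𝕜}

lemma affine {m : 𝕜} (hm : m ≠ 0) (k : 𝕜) : IsExpandingLap (fun x => m * x + k) univ := by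
  refine ⟨?_, fun a _ b _ c _ d _ _ _ _ => (crossRatio_affine hm k a b c d).ge⟩
  rcases hm.lt_or_gt with hm | hm
  · exact .inr fun x _ y _ hxy => by simpa using mul_lt_mul_of_neg_left hxy hm
  · exact .inl fun x _ y _ hxy => by simpa using mul_lt_mul_of_pos_left hxy hm

lemma sq_Ici : IsExpandingLap (fun x : 𝕜 => x ^ 2) (Ici 0) :=
  ⟨.inl fun _ hx _ _ hxy => pow_lt_pow_left₀ hxy hx two_ne_zero,
    fun _ ha _ _ _ _ _ _ hab hbc hcd => crossRatio_le_crossRatio_sq ha hab hbc hcd⟩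

lemma sq_Iic : IsExpandingLap (fun x : 𝕜 => x ^ 2) (Iic 0) := by
  have h := sq_Ici.comp ((affine (neg_ne_zero.mpr one_ne_zero) 0).mono (subset_univ (Iic (0 : 𝕜))))
    (fun x hx => by simpa using hx)
  simpa [Function.comp_def] using h

/-- A fixed point `b` of an expanding lap attracts nothing from the left as soon as the lap moves
some `a < b` to the left and some `Z > b` weakly to the right. -/
lemma lt_self {a b x Z : 𝕜} (hg : IsExpandingLap g (Icc a Z)) (hmono : StrictMonoOn g (Icc a Z))
    (ha : g a < a) (hb : g b = b) (hbZ : b < Z) (hZ : Z ≤ g Z) (hax : a ≤ x) (hxb : x < b) :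
    g x < x := by
  rcases hax.eq_or_lt with rfl | hax
  · exact ha
  by_contra! hx
  have ha' : a ∈ Icc a Z := ⟨le_rfl, by linarith⟩
  have hx' : x ∈ Icc a Z := ⟨hax.le, by linarith⟩
  have hb' : b ∈ Icc a Z := ⟨by linarith, hbZ.le⟩
  have hZ' : Z ∈ Icc a Z := ⟨by linarith, le_rfl⟩
  have hle := hg.crossRatio_le ha' hx' hb' hZ' hax hxb hbZ
  have hgx := hmono hx' hb' hxb
  rw [hb] at hle hgx
  exact hle.not_gt (crossRatio_lt_crossRatio ha hax hx hgx hbZ hZ)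

lemma abs_sub_le_abs_sub {a b c : 𝕜} (hf : IsExpandingLap f I) (ha : a ∈ I) (hb : b ∈ I)
    (hc : c ∈ I) (hab : a ≤ b) (hbc : b ≤ c) : |f b - f a| ≤ |f c - f a| := by
  rcases hf.strictMonoOn_or_strictAntiOn with hf | hf
  · have hba := hf.monotoneOn ha hb hab
    have hcb := hf.monotoneOn hb hc hbc
    exact abs_le_abs_of_nonneg (sub_nonneg.mpr hba) (sub_le_sub_right hcb _)
  · have hba := hf.antitoneOn ha hb hab
    have hcb := hf.antitoneOn hb hc hbc
    exact abs_le_abs_of_nonpos (sub_nonpos.mpr hba) (sub_le_sub_right hcb _)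

lemma abs_sub_le_mul_abs_sub {a b c d θ : 𝕜} (hf : IsExpandingLap f I) (ha : a ∈ I) (hb : b ∈ I)
    (hc : c ∈ I) (hd : d ∈ I) (hab : a < b) (hbc : b < c) (hcd : c < d)
    (h : crossRatio (f a) (f b) (f c) (f d) * (1 - θ) ^ 2 ≤ 4 * θ) :
    |f c - f b| ≤ θ * |f d - f a| := by
  rcases hf.strictMonoOn_or_strictAntiOn with hf | hf
  · have hba := hf ha hb hab
    have hcb := hf hb hc hbc
    have hdc := hf hc hd hcd
    rw [abs_of_pos (sub_pos.mpr hcb), abs_of_pos (by linarith)]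
    exact sub_le_mul_sub_of_crossRatio_le hba hcb hdc h
  · have hba := hf ha hb hab
    have hcb := hf hb hc hbc
    have hdc := hf hc hd hcd
    rw [abs_sub_comm, abs_sub_comm (f d), abs_of_pos (sub_pos.mpr hcb), abs_of_pos (by linarith)]
    rw [← crossRatio_rev] at h
    exact sub_le_mul_sub_of_crossRatio_le hdc hcb hba h

section Iterate

variable {m : ℕ}

lemma iterate (h : ∀ k < m, ∃ J, IsExpandingLap f J ∧ MapsTo f^[k] I J) {k : ℕ} (hk : k ≤ m) :
    IsExpandingLap f^[k] I := by
  induction k with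
  | zero => simpa [Function.id_def] using (affine one_ne_zero (0 : 𝕜)).mono (subset_univ I)
  | succ k ih =>
    obtain ⟨J, hJ, hmaps⟩ := h k hk
    rw [Function.iterate_succ']
    exact hJ.comp (ih (Nat.le_of_succ_le hk)) hmaps

lemma crossRatio_iterate_le (h : ∀ k < m, ∃ J, IsExpandingLap f J ∧ MapsTo f^[k] I J) {k : ℕ}
    (hk : k ≤ m) {a b c d : 𝕜} (ha : a ∈ I) (hb : b ∈ I) (hc : c ∈ I) (hd : d ∈ I)
    (hab : a < b) (hbc : b < c) (hcd : c < d) :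
    crossRatio (f^[k] a) (f^[k] b) (f^[k] c) (f^[k] d) ≤
      crossRatio (f^[m] a) (f^[m] b) (f^[m] c) (f^[m] d) := by
  induction hk using Nat.decreasingInduction with
  | self => exact le_rfl
  | of_succ k hk ih =>
    obtain ⟨J, hJ, hmaps⟩ := h k hk
    refine le_trans ?_ ih
    simp only [Function.iterate_succ_apply']
    exact hJ.crossRatio_le_comp hmaps (iterate h hk.le).strictMonoOn_or_strictAntiOn
      ha hb hc hd hab hbc hcd

end Iterate

end IsExpandingLap

end CrossRatio

/-! ### Choice of the parameter -/

lemma exists_seq_of_step {α : Type*} {P : ℕ → α → Prop} {R : ℕ → α → α → Prop} {a : α}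
    (h₀ : P 0 a) (hstep : ∀ n x, P n x → ∃ y, P (n + 1) y ∧ R n x y) :
    ∃ u : ℕ → α, u 0 = a ∧ (∀ n, P n (u n)) ∧ ∀ n, R n (u n) (u (n + 1)) := by
  choose! next hP hR using hstep
  let u : ℕ → α := fun n => n.rec a next
  have hu : ∀ n, P n (u n) := fun n => n.rec h₀ fun n ih => hP n _ ih
  exact ⟨u, rfl, hu, fun n => hR n _ (hu n)⟩

section FirstCrossing

variable {α β : Type*} [ConditionallyCompleteLinearOrder α] [TopologicalSpace α] [OrderTopology α]
  [DenselyOrdered α] [LinearOrder β] [TopologicalSpace β] [OrderClosedTopology β]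
  {f : α → β} {s t : α} {c : β}

lemma exists_first_eq (hf : ContinuousOn f (Icc s t)) (hst : s ≤ t) (hs : f s < c) (ht : c ≤ f t) :
    ∃ x ∈ Ioc s t, f x = c ∧ ∀ y ∈ Ico s x, f y < c := by
  have hcpt : IsCompact (Icc s t ∩ f ⁻¹' Ici c) :=
    isCompact_Icc.of_isClosed_subset (hf.preimage_isClosed_of_isClosed isClosed_Icc isClosed_Ici)
      inter_subset_left
  obtain ⟨x, ⟨hx, hcx⟩, hmin⟩ := hcpt.exists_isLeast ⟨t, ⟨hst, le_rfl⟩, ht⟩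
  obtain ⟨y, hy, rfl⟩ := intermediate_value_Icc hx.1
    (hf.mono (Icc_subset_Icc_right hx.2)) ⟨hs.le, hcx⟩
  obtain rfl : y = x := le_antisymm hy.2 (hmin ⟨⟨hy.1, hy.2.trans hx.2⟩, le_rfl⟩)
  refine ⟨y, ⟨hx.1.lt_of_ne ?_, hx.2⟩, rfl, fun z hz => not_le.mp fun hcz => ?_⟩
  · rintro rfl
    exact hs.false
  · exact hz.2.not_ge (hmin ⟨⟨hz.1, hz.2.le.trans hx.2⟩, hcz⟩)

lemma exists_last_eq (hf : ContinuousOn f (Icc s t)) (hst : s ≤ t) (hs : c ≤ f s) (ht : f t < c) :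
    ∃ x ∈ Ico s t, f x = c ∧ ∀ y ∈ Ioc x t, f y < c := by
  obtain ⟨x, hx, hxc, hlt⟩ := exists_first_eq (α := αᵒᵈ) (f := f ∘ OrderDual.ofDual)
    (s := OrderDual.toDual t) (t := OrderDual.toDual s) (c := c)
    (by rw [Icc_toDual]; exact hf) hst ht hs
  exact ⟨OrderDual.ofDual x, ⟨hx.2, hx.1⟩, hxc, fun y hy => hlt (OrderDual.toDual y) ⟨hy.2, hy.1⟩⟩

end FirstCrossing

lemma eventually_apply_sq_nonpos {X : Type*} [PseudoMetricSpace X]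
    {F : X × ℝ → ℝ} (hF : LocallyLipschitz F) {s : X} (hs : F (s, 0) = 0) :
    ∀ᶠ r in 𝓝 s, F (r, 0) ≤ 0 → F (r, F (r, 0) ^ 2) ≤ 0 := by
  obtain ⟨K, W, hW, hK⟩ := hF (s, 0)
  have hcont : Continuous fun r => F (r, 0) := hF.continuous.comp (by fun_prop)
  have h₁ : ∀ᶠ r in 𝓝 s, (r, F (r, 0) ^ 2) ∈ W :=
    (continuous_id.prodMk (hcont.pow 2)).tendsto' s (s, 0) (by simp [hs]) hW
  have h₂ : ∀ᶠ r in 𝓝 s, (r, (0 : ℝ)) ∈ W :=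
    (continuous_id.prodMk continuous_const).tendsto' s (s, 0) rfl hW
  have h₃ : ∀ᶠ r in 𝓝 s, K * |F (r, 0)| < 1 :=
    ((continuous_const.mul hcont.abs).tendsto' s 0 (by simp [hs])).eventually (gt_mem_nhds one_pos)
  filter_upwards [h₁, h₂, h₃] with r hr₁ hr₂ hr₃ hneg
  have hdist := hK.dist_le_mul _ hr₁ _ hr₂
  rw [Prod.dist_eq, dist_self, Real.dist_eq, Real.dist_eq, sub_zero,
    max_eq_right (abs_nonneg _), abs_of_nonneg (sq_nonneg (F (r, 0)))] at hdist
  rw [abs_of_nonpos hneg] at hr₃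
  nlinarith [(abs_le.mp hdist).2]

/-- One period doubling renormalization step, without rescaling, for even unimodal maps
`x ↦ h (x ^ 2)`: the second iterate is `x ↦ -renorm h (x ^ 2)`. -/
def renorm (h : ℝ → ℝ) (u : ℝ) : ℝ := -h (h u ^ 2)

lemma continuous_renorm {h : ℝ → ℝ} (hh : Continuous h) : Continuous (renorm h) := by
  unfold renorm
  fun_prop

lemma contDiff_renorm {h : ℝ → ℝ → ℝ} {n : WithTop ℕ∞} (hh : ContDiff ℝ n ↿h) :
    ContDiff ℝ n ↿fun r => renorm (h r) :=
  (hh.comp (contDiff_fst.prodMk (hh.pow 2))).neg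

/-- In the family `h`, over the parameters of `[s, t]` the critical value `h r 0` stays negative,
while that of `renorm (h r)` runs from a nonnegative value to the value of `h t` itself. -/
structure IsRenormBracket (h : ℝ → ℝ → ℝ) (s t : ℝ) : Prop where
  lt : s < t
  neg : ∀ r ∈ Icc s t, h r 0 < 0
  left : 0 ≤ renorm (h s) 0
  right : renorm (h t) 0 = h t 0

lemma IsRenormBracket.exists_renorm {h : ℝ → ℝ → ℝ} {s t : ℝ} (hh : ContDiff ℝ 1 ↿h)
    (H : IsRenormBracket h s t) :
    ∃ s' t', IsRenormBracket (fun r => renorm (h r)) s' t' ∧ Icc s' t' ⊆ Icc s t ∧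
      ∀ r ∈ Icc s' t', h r (renorm (h r) 0 ^ 2) ≤ renorm (h r) 0 := by
  have hv : ContDiff ℝ 1 fun r => renorm (h r) 0 :=
    (contDiff_renorm hh).comp (contDiff_id.prodMk contDiff_const)
  have hz : Continuous fun r => h r (renorm (h r) 0 ^ 2) - renorm (h r) 0 :=
    (hh.continuous.comp (continuous_id.prodMk (hv.continuous.pow 2))).sub hv.continuous
  have htneg : h t 0 < 0 := H.neg t (right_mem_Icc.mpr H.lt.le)
  obtain ⟨s₀, hs₀, hs₀v, hvneg⟩ := exists_last_eq hv.continuous.continuousOn H.lt.le H.left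
    (H.right.trans_lt htneg)
  have hs₀z : h s₀ (renorm (h s₀) 0 ^ 2) - renorm (h s₀) 0 < 0 := by
    simpa [hs₀v] using H.neg s₀ (Ico_subset_Icc_self hs₀)
  have htz : 0 ≤ h t (renorm (h t) 0 ^ 2) - renorm (h t) 0 := by
    have : -h t (h t 0 ^ 2) = h t 0 := H.right
    rw [H.right]
    linarith
  obtain ⟨t₀, ht₀, ht₀z, hzneg⟩ := exists_first_eq hz.continuousOn hs₀.2.le hs₀z htz
  obtain ⟨s', hs'v, hs'⟩ := ((eventually_apply_sq_nonpos (contDiff_renorm hh).locallyLipschitz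
    hs₀v).filter_mono nhdsWithin_le_nhds |>.and (Ioo_mem_nhdsGT ht₀.1)).exists
  have hvneg' : ∀ r ∈ Icc s' t₀, renorm (h r) 0 < 0 := fun r hr =>
    hvneg r ⟨hs'.1.trans_le hr.1, hr.2.trans ht₀.2⟩
  refine ⟨s', t₀, ⟨hs'.2, hvneg', ?_, ?_⟩,
    Icc_subset_Icc (hs₀.1.trans hs'.1.le) ht₀.2, fun r hr => ?_⟩
  · exact neg_nonneg.mpr (hs'v (hvneg' s' (left_mem_Icc.mpr hs'.2.le)).le)
  · have hfix : h t₀ (renorm (h t₀) 0 ^ 2) = renorm (h t₀) 0 := sub_eq_zero.mp ht₀z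
    change - -h t₀ (h t₀ (renorm (h t₀) 0 ^ 2) ^ 2) = _
    rw [hfix, hfix, neg_neg]
  · rcases hr.2.eq_or_lt with rfl | hlt
    · linarith
    · linarith [hzneg r ⟨hs'.1.le.trans hr.1, hlt⟩]

/-- The profile of the `n`-th return of the family `quartic r`: up to sign, `quartic r` iterated
`2 ^ n` times is `x ↦ profile r n (x ^ 2)`. -/
def profile (r : ℝ) : ℕ → ℝ → ℝ
  | 0 => fun u => 1 - r * (1 - u) ^ 2
  | n + 1 => renorm (profile r n)

@[simp] lemma profile_zero (r u : ℝ) : profile r 0 u = 1 - r * (1 - u) ^ 2 := rfl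

lemma profile_succ (r : ℝ) (n : ℕ) : profile r (n + 1) = renorm (profile r n) := rfl

lemma contDiff_profile (n : ℕ) : ContDiff ℝ 1 ↿fun r => profile r n := by
  induction n with
  | zero =>
    change ContDiff ℝ 1 fun q : ℝ × ℝ => 1 - q.1 * (1 - q.2) ^ 2
    fun_prop
  | succ n ih => exact contDiff_renorm ih

lemma isRenormBracket_profile_zero {t : ℝ} (ht : 6 / 5 < t) (heq : t ^ 3 * (2 - t) = 1) :
    IsRenormBracket (fun r => profile r 0) (6 / 5) t where
  lt := ht
  neg r hr := by
    rw [profile_zero]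
    linarith [hr.1]
  left := by
    norm_num [renorm]
  right := by
    simp only [renorm, profile_zero]
    linear_combination (t ^ 3 * (2 - t) + 1) * heq - (t ^ 3 * (2 - t) - 1 + t) * heq

/-- A parameter of `quartic` at which all period doubling renormalizations exist, with the
estimates on the critical values needed to bound the geometry of the return intervals. -/
structure IsInfinitelyRenormalizable (r : ℝ) : Prop where
  six_fifths_le : 6 / 5 ≤ r
  le_two : r ≤ 2
  one_le_cubic : 1 ≤ r ^ 3 * (2 - r)
  profile_neg : ∀ n, profile r n 0 < 0
  profile_le : ∀ n, profile r n (profile r (n + 1) 0 ^ 2) ≤ profile r (n + 1) 0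

lemma exists_isInfinitelyRenormalizable : ∃ r, IsInfinitelyRenormalizable r := by
  obtain ⟨t, ⟨ht, ht₂⟩, heq, hlt⟩ := exists_first_eq (f := fun r : ℝ => -(r ^ 3 * (2 - r)))
    (s := 6 / 5) (t := 2) (c := -1) (by fun_prop) (by norm_num) (by norm_num) (by norm_num)
  obtain ⟨J, hJ₀, hJ, hstep⟩ := exists_seq_of_step (α := ℝ × ℝ)
    (P := fun n J => IsRenormBracket (fun r => profile r n) J.1 J.2)
    (R := fun n J J' => Icc J'.1 J'.2 ⊆ Icc J.1 J.2 ∧ ∀ r ∈ Icc J'.1 J'.2,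
      profile r n (profile r (n + 1) 0 ^ 2) ≤ profile r (n + 1) 0)
    (a := (6 / 5, t)) (isRenormBracket_profile_zero ht (neg_inj.mp heq)) fun n J hJ => by
      obtain ⟨s', t', h⟩ := hJ.exists_renorm (contDiff_profile n)
      exact ⟨(s', t'), h⟩
  obtain ⟨r, hr⟩ := IsCompact.nonempty_iInter_of_sequence_nonempty_isCompact_isClosed
    (fun n => Icc (J n).1 (J n).2) (fun n => (hstep n).1) (fun n => nonempty_Icc.mpr (hJ n).lt.le)
    isCompact_Icc fun _ => isClosed_Icc
  rw [mem_iInter] at hr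
  obtain ⟨hr₁, hr₂⟩ : r ∈ Icc (6 / 5) t := by simpa [hJ₀] using hr 0
  refine ⟨r, hr₁, hr₂.trans ht₂, ?_, fun n => (hJ n).neg r (hr n),
    fun n => (hstep n).2 r (hr (n + 1))⟩
  rcases hr₂.eq_or_lt with rfl | hrt
  · linarith
  · linarith [hlt r ⟨hr₁, hrt⟩]

/-! ### Real bounds for return profiles -/

/-- `h` extends to a lap on `[-s, Z ^ 2]`, a definite neighbourhood of `[0, b ^ 2]`. -/
structure IsReturnExtension (h : ℝ → ℝ) (b s Z : ℝ) : Prop where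
  pos : 0 < s
  lt : b < Z
  strictMonoOn : StrictMonoOn h (Icc (-s) (Z ^ 2))
  isExpandingLap : IsExpandingLap h (Icc (-s) (Z ^ 2))
  apply_neg_le : h (-s) ≤ -(11 / 10 * b)
  le_apply_sq : Z ≤ h (Z ^ 2)

/-- `x ↦ h (x ^ 2)` is a return map of the interval `[-b, b]` to itself, with repelling boundary
point `b`. -/
structure IsReturnProfile (h : ℝ → ℝ) (b : ℝ) : Prop where
  continuous : Continuous h
  pos : 0 < b
  apply_sq : h (b ^ 2) = b
  neg : h 0 < 0
  neg_le : -b ≤ h 0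
  exists_extension : ∃ s Z, IsReturnExtension h b s Z

/-- `x ↦ h (x ^ 2)` maps `c` to its mirror image `-c`; then `[-c, c]` is the return interval of
`renorm h`. -/
structure IsFlipPoint (h : ℝ → ℝ) (b c : ℝ) : Prop where
  pos : 0 < c
  lt : c < b
  apply_sq : h (c ^ 2) = -c
  lt_neg : c < -h 0
  neg_lt : -h 0 < b
  neg_renorm_le : -renorm h 0 ≤ c

section ProfileZero

variable {r : ℝ}

lemma isExpandingLap_profile_zero (hr : r ≠ 0) : IsExpandingLap (profile r 0) (Iic 1) := by
  have h := (IsExpandingLap.affine (neg_ne_zero.mpr hr) 1).comp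
    (IsExpandingLap.sq_Iic.comp
      ((IsExpandingLap.affine one_ne_zero (-1)).mono (subset_univ (Iic 1)))
      fun x hx => by simpa using hx) (mapsTo_univ _ _)
  convert h using 1
  ext u
  simp only [profile_zero, Function.comp_apply]
  ring

lemma strictMonoOn_profile_zero (hr : 0 < r) : StrictMonoOn (profile r 0) (Iic 1) := by
  intro x hx y hy hxy
  simp only [mem_Iic] at hx hy
  have : (1 - y) ^ 2 < (1 - x) ^ 2 := by gcongr
  simp only [profile_zero]
  gcongr

lemma continuous_profile (r : ℝ) (n : ℕ) : Continuous (profile r n) :=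
  (contDiff_profile n).continuous.comp (by fun_prop : Continuous fun u : ℝ => (r, u))

lemma exists_isReturnProfile_profile_zero (hr₁ : 6 / 5 ≤ r) (hr₂ : r ≤ 2)
    (hr₃ : 1 ≤ r ^ 3 * (2 - r)) : ∃ b < 1, IsReturnProfile (profile r 0) b := by
  -- Apart from `1`, the fixed points of `x ↦ 1 - r (1 - x²)²` solve `r (1 - x) (1 + x)² = 1`.
  have hcont : ContinuousOn (fun x : ℝ => r * (1 - x) * (1 + x) ^ 2) (Icc 0.62 1) := by fun_prop
  obtain ⟨b, ⟨hb₀, hb₁⟩, hb⟩ := intermediate_value_Ico' (by norm_num) hcont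
    (show (1 : ℝ) ∈ Ioc _ _ from ⟨by norm_num, by norm_num; nlinarith⟩)
  have hb : r * (1 - b) * (1 + b) ^ 2 = 1 := hb
  have hr : 0 < r := by linarith
  have hext : IsReturnExtension (profile r 0) b 1 1 :=
    { pos := one_pos
      lt := hb₁
      strictMonoOn := (strictMonoOn_profile_zero hr).mono fun x hx => by simpa using hx.2
      isExpandingLap := (isExpandingLap_profile_zero hr.ne').mono fun x hx => by simpa using hx.2
      apply_neg_le := by rw [profile_zero]; linarith
      le_apply_sq := by simp }
  have hrb : r - 1 ≤ b := by
    by_contra! hlt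
    have hfactor : r ^ 3 * (2 - r) - r * (1 - b) * (1 + b) ^ 2 =
        r * (r - 1 - b) * (1 - (r - 1 + b) - ((r - 1) ^ 2 + (r - 1) * b + b ^ 2)) := by ring
    have hneg : 1 - (r - 1 + b) - ((r - 1) ^ 2 + (r - 1) * b + b ^ 2) < 0 := by nlinarith
    nlinarith [mul_pos hr (sub_pos.mpr hlt)]
  refine ⟨b, hb₁, continuous_profile r 0, by linarith, ?_, ?_, ?_, 1, 1, hext⟩
  · rw [profile_zero]
    linear_combination -(1 - b) * hb
  · rw [profile_zero]
    linarith
  · rw [profile_zero]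
    linarith

end ProfileZero

namespace IsReturnProfile

variable {h : ℝ → ℝ} {b : ℝ}

lemma strictMonoOn (L : IsReturnProfile h b) : StrictMonoOn h (Icc 0 (b ^ 2)) := by
  obtain ⟨s, Z, E⟩ := L.exists_extension
  exact E.strictMonoOn.mono
    (Icc_subset_Icc (neg_nonpos.mpr E.pos.le) (pow_le_pow_left₀ L.pos.le E.lt.le 2))

lemma strictMonoOn_sq (L : IsReturnProfile h b) : StrictMonoOn (fun x => h (x ^ 2)) (Icc 0 b) :=
  L.strictMonoOn.comp (fun _ hx _ _ hxy => pow_lt_pow_left₀ hxy hx.1 two_ne_zero)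
    fun _ hx => ⟨sq_nonneg _, pow_le_pow_left₀ hx.1 hx.2 2⟩

lemma apply_sq_le (L : IsReturnProfile h b) {x y : ℝ} (hxy : |x| ≤ |y|) (hy : |y| ≤ b) :
    h (x ^ 2) ≤ h (y ^ 2) := by
  have := L.strictMonoOn_sq.monotoneOn ⟨abs_nonneg x, hxy.trans hy⟩ ⟨abs_nonneg y, hy⟩ hxy
  simpa only [sq_abs] using this

lemma apply_sq_lt_self (L : IsReturnProfile h b) {x : ℝ} (hx : 0 ≤ x) (hxb : x < b) :
    h (x ^ 2) < x := by
  obtain ⟨s, Z, E⟩ := L.exists_extension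
  have hmaps : MapsTo (fun x => x ^ 2) (Icc 0 Z) (Icc (-s) (Z ^ 2)) := fun x hx =>
    ⟨by linarith [E.pos, sq_nonneg x], pow_le_pow_left₀ hx.1 hx.2 2⟩
  have hmono : StrictMonoOn (fun x => h (x ^ 2)) (Icc 0 Z) :=
    E.strictMonoOn.comp (fun _ hx _ _ hxy => pow_lt_pow_left₀ hxy hx.1 two_ne_zero) hmaps
  exact (E.isExpandingLap.comp (IsExpandingLap.sq_Ici.mono Icc_subset_Ici_self) hmaps).lt_self hmono
    (by simpa using L.neg) L.apply_sq E.lt E.le_apply_sq hx hxb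

lemma exists_isFlipPoint (L : IsReturnProfile h b) (h₁ : renorm h 0 < 0)
    (h₂ : h (renorm h 0 ^ 2) ≤ renorm h 0) : ∃ c, IsFlipPoint h b c := by
  have hcont := L.continuous
  obtain ⟨c, ⟨hc₀, hcb⟩, hc⟩ := intermediate_value_Ioo L.pos.le
    (show ContinuousOn (fun x => h (x ^ 2) + x) (Icc 0 b) by fun_prop)
    (show (0 : ℝ) ∈ Ioo _ _ from ⟨by simpa using L.neg, by linarith [L.pos, L.apply_sq]⟩)
  have hc : h (c ^ 2) = -c := eq_neg_of_add_eq_zero_left hc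
  have hw : |h 0| ≤ b := abs_le.mpr ⟨L.neg_le, L.neg.le.trans L.pos.le⟩
  have hw' : -renorm h 0 = h (h 0 ^ 2) := neg_neg _
  have hle_c : -renorm h 0 ≤ c := by
    by_contra! hlt
    have hle := L.apply_sq_le (hw.trans (le_abs_self b)) (abs_of_pos L.pos).le
    rw [← hw', L.apply_sq] at hle
    have := L.strictMonoOn_sq ⟨hc₀.le, hcb.le⟩ ⟨(neg_pos.mpr h₁).le, hle⟩ hlt
    simp only [neg_sq, hc] at this
    linarith
  have hc_lt : h 0 < -c := by
    simpa [hc] using L.strictMonoOn_sq ⟨le_rfl, L.pos.le⟩ ⟨hc₀.le, hcb.le⟩ hc₀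
  refine ⟨c, hc₀, hcb, hc, by linarith,
    lt_of_le_of_ne (by linarith [L.neg_le]) fun heq => ?_, hle_c⟩
  rw [← neg_sq, heq, L.apply_sq] at hw'
  linarith

lemma mul_flipPoint_le (L : IsReturnProfile h b) {c : ℝ} (C : IsFlipPoint h b c)
    (h₁ : renorm h 0 < 0) : 11 / 10 * c ≤ -h 0 := by
  obtain ⟨s, Z, E⟩ := L.exists_extension
  have hw' : h (h 0 ^ 2) = -renorm h 0 := (neg_neg _).symm
  obtain ⟨hc₀, -, hc, hcw, hwb, hw'c⟩ := C
  have hw'₀ : 0 < -renorm h 0 := neg_pos.mpr h₁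
  have hsq : c ^ 2 < h 0 ^ 2 := by nlinarith
  have hmem : ∀ {x}, 0 ≤ x → x ≤ h 0 ^ 2 → x ∈ Icc (-s) (Z ^ 2) := fun hx hx' =>
    ⟨by linarith [E.pos], hx'.trans (by nlinarith [E.lt])⟩
  have hcr := E.isExpandingLap.crossRatio_le ⟨le_rfl, by linarith [E.pos, sq_nonneg Z]⟩
    (hmem le_rfl (sq_nonneg _)) (hmem (sq_nonneg c) hsq.le) (hmem (sq_nonneg _) le_rfl)
    (neg_lt_zero.mpr E.pos) (by positivity) hsq
  rw [hc, hw'] at hcr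
  have hl : h (-s) ≤ -(11 / 10 * -h 0) := by linarith [E.apply_neg_le]
  have hs := E.pos
  by_contra! hlt
  generalize h (-s) = l at *
  generalize -renorm h 0 = w' at *
  generalize h 0 = v at *
  have hleft : 4 < crossRatio (-s) 0 (c ^ 2) (v ^ 2) := by
    have : v ^ 2 - c ^ 2 < 1 / 4 * c ^ 2 := by nlinarith
    rw [crossRatio, lt_div_iff₀ (mul_pos (by linarith) (by linarith))]
    nlinarith [mul_lt_mul_of_pos_left this hs, mul_pos (pow_pos hc₀ 2) (hsq.trans' (pow_pos hc₀ 2))]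
  have hright : crossRatio l v (-c) w' ≤ 3 := by
    rw [crossRatio, div_le_iff₀ (mul_pos (by linarith) (by linarith))]
    have := mul_le_mul (by linarith : w' - l ≤ 21 * (v - l))
      (by linarith : -c - v ≤ 1 / 10 * (w' + c)) (by linarith) (by linarith)
    nlinarith [mul_pos (by linarith : 0 < v - l) (by linarith : 0 < w' + c)]
  linarith

lemma exists_renorm_extension (L : IsReturnProfile h b) {c : ℝ} (C : IsFlipPoint h b c)
    (h₁ : renorm h 0 < 0) : ∃ s Z, IsReturnExtension (renorm h) c s Z := by
  obtain ⟨s, Z, E⟩ := L.exists_extension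
  obtain ⟨s', ⟨hs's, hs'₀⟩, hs'⟩ := intermediate_value_Ico (neg_nonpos.mpr E.pos.le)
    L.continuous.continuousOn ⟨by linarith [E.apply_neg_le, L.pos], neg_lt_of_neg_lt C.neg_lt⟩
  obtain ⟨ζ, ⟨hcζ, hζw⟩, hζ⟩ := intermediate_value_Ioo (by nlinarith [C.pos, C.lt_neg])
    L.continuous.continuousOn (show (0 : ℝ) ∈ Ioo (h (c ^ 2)) (h (h 0 ^ 2)) from
      ⟨by simpa [C.apply_sq] using C.pos, neg_lt_zero.mp h₁⟩)
  have hζ₀ : 0 < ζ := hcζ.trans' (pow_pos C.pos 2)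
  have hζZ : ζ ≤ Z ^ 2 := by nlinarith [C.neg_lt, E.lt, L.pos, L.neg]
  have hmono := E.strictMonoOn.mono (Icc_subset_Icc hs's hζZ)
  have hmaps : MapsTo h (Icc s' ζ) (Icc (-b) 0) := fun x hx =>
    ⟨hs' ▸ hmono.monotoneOn ⟨le_rfl, hx.1.trans hx.2⟩ hx hx.1,
      hζ ▸ hmono.monotoneOn hx ⟨hx.1.trans hx.2, le_rfl⟩ hx.2⟩
  have hmaps_sq : MapsTo (fun x => x ^ 2) (Icc (-b) 0) (Icc 0 (b ^ 2)) := fun x hx =>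
    ⟨sq_nonneg x, by nlinarith [hx.1, hx.2]⟩
  have hanti : StrictAntiOn (fun x : ℝ => x ^ 2) (Icc (-b) 0) := fun x _ y hy hxy => by
    nlinarith [hy.2]
  have hlap : IsExpandingLap h (Icc 0 (b ^ 2)) := E.isExpandingLap.mono
    (Icc_subset_Icc (neg_nonpos.mpr E.pos.le) (pow_le_pow_left₀ L.pos.le E.lt.le 2))
  have hrenorm : renorm h = (fun x => -1 * x + 0) ∘ h ∘ (fun x => x ^ 2) ∘ h := by
    ext x
    simp [renorm]
  refine ⟨-s', √ζ, neg_pos.mpr hs'₀, Real.lt_sqrt_of_sq_lt hcζ, ?_, ?_, ?_, ?_⟩ <;>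
    simp only [neg_neg, Real.sq_sqrt hζ₀.le]
  · exact (L.strictMonoOn.comp_strictAntiOn (hanti.comp_strictMonoOn hmono hmaps)
      (hmaps_sq.comp hmaps)).neg
  · rw [hrenorm]
    exact (IsExpandingLap.affine (neg_ne_zero.mpr one_ne_zero) 0).comp (hlap.comp
      ((IsExpandingLap.sq_Iic.mono Icc_subset_Iic_self).comp
        (E.isExpandingLap.mono (Icc_subset_Icc hs's hζZ)) hmaps) (hmaps_sq.comp hmaps))
      (mapsTo_univ _ _)
  · rw [renorm, hs', neg_sq, L.apply_sq]
    linarith [L.mul_flipPoint_le C h₁, C.neg_lt]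
  · rw [renorm, hζ, zero_pow two_ne_zero, Real.sqrt_le_left (neg_pos.mpr L.neg).le, neg_sq]
    exact hζw.le

lemma exists_renorm (L : IsReturnProfile h b) (h₁ : renorm h 0 < 0)
    (h₂ : h (renorm h 0 ^ 2) ≤ renorm h 0) :
    ∃ c, IsReturnProfile (renorm h) c ∧ IsFlipPoint h b c ∧ 11 / 10 * c ≤ -h 0 := by
  obtain ⟨c, C⟩ := L.exists_isFlipPoint h₁ h₂
  refine ⟨c, ⟨continuous_renorm L.continuous, C.pos, ?_, h₁, by linarith [C.neg_renorm_le],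
    L.exists_renorm_extension C h₁⟩, C, L.mul_flipPoint_le C h₁⟩
  rw [renorm, C.apply_sq, neg_sq, C.apply_sq, neg_neg]

end IsReturnProfile

/-! ### Adding machines -/

/-- A nested sequence of cyclic covers: the pieces `K n i`, `i ∈ ℤ/pⁿ`, are permuted cyclically
by `f` and shrink to points along every `p`-adic integer. The disjointness condition is only
asked of the pieces inside `K n 0`, as the dynamics transports it to all the others. -/
structure IsAddingMachineTower {X : Type*} [PseudoMetricSpace X] (p : ℕ) [Fact p.Prime]
    (f : X → X) (K : (n : ℕ) → ZMod (p ^ n) → Set X) : Prop where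
  isCompact : ∀ n i, IsCompact (K n i)
  nonempty : ∀ n i, (K n i).Nonempty
  nested : ∀ n (i : ZMod (p ^ (n + 1))), K (n + 1) i ⊆ K n i.cast
  mapsTo : ∀ n i, MapsTo f (K n i) (K n (i + 1))
  disjoint : ∀ n (i : ZMod (p ^ (n + 1))), i ≠ 0 → (i.cast : ZMod (p ^ n)) = 0 →
    Disjoint (K (n + 1) 0) (K (n + 1) i)
  tendsto_diam : ∀ x : ℤ_[p],
    Tendsto (fun n => Metric.diam (K n (PadicInt.toZModPow n x))) atTop (𝓝 0)

lemma eventually_toZModPow_eq {p : ℕ} [Fact p.Prime] (n : ℕ) (x : ℤ_[p]) :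
    ∀ᶠ y in 𝓝 x, PadicInt.toZModPow n y = PadicInt.toZModPow n x := by
  have hp : (0 : ℝ) < p := mod_cast (Fact.out : p.Prime).pos
  filter_upwards [Metric.ball_mem_nhds x (show (0 : ℝ) < p ^ (-(n : ℤ)) by positivity)] with y hy
  have hyx : ‖y - x‖ ≤ (p : ℝ) ^ (-(n : ℤ)) := by
    rw [← dist_eq_norm]
    exact (Metric.mem_ball.mp hy).le
  rwa [PadicInt.norm_le_pow_iff_mem_span_pow, ← PadicInt.ker_toZModPow, RingHom.mem_ker, map_sub,
    sub_eq_zero] at hyx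

namespace IsAddingMachineTower

variable {X : Type*} [MetricSpace X] {p : ℕ} [Fact p.Prime] {f : X → X}
  {K : (n : ℕ) → ZMod (p ^ n) → Set X}

lemma subset_toZModPow (hK : IsAddingMachineTower p f K) (n : ℕ) (x : ℤ_[p]) :
    K (n + 1) (PadicInt.toZModPow (n + 1) x) ⊆ K n (PadicInt.toZModPow n x) := by
  simpa only [PadicInt.cast_toZModPow n (n + 1) n.le_succ] using
    hK.nested n (PadicInt.toZModPow (n + 1) x)

lemma exists_forall_mem (hK : IsAddingMachineTower p f K) (x : ℤ_[p]) :
    ∃ y, ∀ n, y ∈ K n (PadicInt.toZModPow n x) := by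
  obtain ⟨y, hy⟩ := IsCompact.nonempty_iInter_of_sequence_nonempty_isCompact_isClosed
    (fun n => K n (PadicInt.toZModPow n x)) (fun n => hK.subset_toZModPow n x)
    (fun n => hK.nonempty n _) (hK.isCompact 0 _) (fun n => (hK.isCompact n _).isClosed)
  exact ⟨y, mem_iInter.mp hy⟩

/-- The point of `X` with a given `p`-adic address. -/
noncomputable def code (hK : IsAddingMachineTower p f K) (x : ℤ_[p]) : X :=
  (hK.exists_forall_mem x).choose

lemma code_mem (hK : IsAddingMachineTower p f K) (x : ℤ_[p]) (n : ℕ) :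
    hK.code x ∈ K n (PadicInt.toZModPow n x) :=
  (hK.exists_forall_mem x).choose_spec n

lemma dist_le_diam (hK : IsAddingMachineTower p f K) {n : ℕ} {i : ZMod (p ^ n)} {y z : X}
    (hy : y ∈ K n i) (hz : z ∈ K n i) : dist y z ≤ Metric.diam (K n i) :=
  Metric.dist_le_diam_of_mem (hK.isCompact n i).isBounded hy hz

lemma eq_code (hK : IsAddingMachineTower p f K) {x : ℤ_[p]} {y : X}
    (hy : ∀ n, y ∈ K n (PadicInt.toZModPow n x)) : y = hK.code x :=
  dist_le_zero.mp <| ge_of_tendsto' (hK.tendsto_diam x) fun n =>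
    hK.dist_le_diam (hy n) (hK.code_mem x n)

lemma code_add_one (hK : IsAddingMachineTower p f K) (x : ℤ_[p]) :
    hK.code (x + 1) = f (hK.code x) := by
  refine (hK.eq_code fun n => ?_).symm
  rw [map_add, map_one]
  exact hK.mapsTo n _ (hK.code_mem x n)

lemma code_add_natCast (hK : IsAddingMachineTower p f K) (x : ℤ_[p]) (k : ℕ) :
    hK.code (x + k) = f^[k] (hK.code x) := by
  induction k with
  | zero => simp
  | succ k ih =>
    rw [Nat.cast_succ, ← add_assoc, code_add_one, ih, Function.iterate_succ_apply']

lemma continuous_code (hK : IsAddingMachineTower p f K) : Continuous hK.code := by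
  refine continuous_iff_continuousAt.mpr fun x => Metric.tendsto_nhds.mpr fun ε hε => ?_
  obtain ⟨n, hn⟩ := ((hK.tendsto_diam x).eventually (gt_mem_nhds hε)).exists
  filter_upwards [eventually_toZModPow_eq n x] with y hy
  exact (hK.dist_le_diam (hy ▸ hK.code_mem y n) (hK.code_mem x n)).trans_lt hn

lemma injective_code (hK : IsAddingMachineTower p f K) : Function.Injective hK.code := by
  intro x y hxy
  refine PadicInt.ext_of_toZModPow.mp fun n => ?_
  induction n with
  | zero => exact Subsingleton.elim (α := ZMod 1) _ _
  | succ n ih =>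
    by_contra hne
    let k := (-PadicInt.toZModPow (n + 1) x).val
    have hk : (k : ZMod (p ^ (n + 1))) = -PadicInt.toZModPow (n + 1) x := ZMod.natCast_zmod_val _
    have hx := hK.code_mem (x + k) (n + 1)
    have hy := hK.code_mem (y + k) (n + 1)
    have hxyk : hK.code (x + k) = hK.code (y + k) := by
      rw [hK.code_add_natCast, hK.code_add_natCast, hxy]
    rw [map_add, map_natCast, hk, add_neg_cancel, hxyk] at hx
    refine (hK.disjoint n (PadicInt.toZModPow (n + 1) (y + k)) ?_ ?_).le_bot ⟨hx, hy⟩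
    · rwa [map_add, map_natCast, hk, ← sub_eq_add_neg, sub_ne_zero, ne_comm]
    · have hk' : (k : ZMod (p ^ n)) = -PadicInt.toZModPow n x := by
        have hcast := congrArg (ZMod.castHom (pow_dvd_pow p n.le_succ) (ZMod (p ^ n))) hk
        rwa [map_natCast, map_neg, ZMod.castHom_apply,
          PadicInt.cast_toZModPow n (n + 1) n.le_succ] at hcast
      rw [PadicInt.cast_toZModPow n (n + 1) n.le_succ, map_add, map_natCast, hk', ih,
        add_neg_cancel]

end IsAddingMachineTower

/-! ### The infinitely renormalizable quartic map -/

lemma tendsto_zero_of_frequently_le_mul {l : ℕ → ℝ} {θ : ℝ} (hl₀ : ∀ n, 0 ≤ l n)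
    (hl : Antitone l) (hθ : θ < 1) (h : ∃ᶠ n in atTop, l (n + 1) ≤ θ * l n) :
    Tendsto l atTop (𝓝 0) := by
  have hlim := tendsto_atTop_ciInf hl ⟨0, forall_mem_range.mpr hl₀⟩
  have hinf : ⨅ n, l n = 0 := by
    refine le_antisymm ?_ (le_ciInf hl₀)
    by_contra! hpos
    have hlt : θ * ⨅ n, l n < ⨅ n, l n := mul_lt_of_lt_one_left hpos hθ
    obtain ⟨n, hle, hgt⟩ := (h.and_eventually
      ((hlim.const_mul θ).eventually_lt (hlim.comp (tendsto_add_atTop_nat 1)) hlt)).exists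
    exact hle.not_gt hgt
  rwa [hinf] at hlim

/-- The one-dimensional family driving the skew product. -/
def quartic (r x : ℝ) : ℝ := 1 - r * (1 - x ^ 2) ^ 2

section Quartic

variable {r : ℝ}

lemma continuous_quartic (r : ℝ) : Continuous (quartic r) := by
  unfold quartic
  fun_prop

lemma quartic_iterate_two_pow (r : ℝ) (n : ℕ) (x : ℝ) :
    (quartic r)^[2 ^ n] x = (-1) ^ n * profile r n (x ^ 2) := by
  induction n generalizing x with
  | zero => simp [quartic]
  | succ n ih =>
    rw [pow_succ 2, mul_two, Function.iterate_add_apply, ih, ih x, profile_succ, renorm, mul_pow,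
      ← pow_mul, mul_comm n, pow_mul, neg_one_sq, one_pow, one_mul]
    ring

lemma abs_quartic_iterate_two_pow (r : ℝ) (n : ℕ) (x : ℝ) :
    |(quartic r)^[2 ^ n] x| = |profile r n (x ^ 2)| := by
  rw [quartic_iterate_two_pow, abs_mul, abs_neg_one_pow, one_mul]

lemma quartic_iterate_abs {k : ℕ} (hk : k ≠ 0) (x : ℝ) :
    (quartic r)^[k] |x| = (quartic r)^[k] x := by
  obtain ⟨j, rfl⟩ := Nat.exists_eq_succ_of_ne_zero hk
  simp only [Function.iterate_succ_apply, quartic, sq_abs]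

lemma isExpandingLap_quartic_Icc_zero_one (hr : r ≠ 0) :
    IsExpandingLap (quartic r) (Icc 0 1) :=
  (isExpandingLap_profile_zero hr).comp (IsExpandingLap.sq_Ici.mono Icc_subset_Ici_self)
    fun _ hx => pow_le_one₀ hx.1 hx.2

lemma isExpandingLap_quartic_Icc_neg_one_zero (hr : r ≠ 0) :
    IsExpandingLap (quartic r) (Icc (-1) 0) :=
  (isExpandingLap_profile_zero hr).comp (IsExpandingLap.sq_Iic.mono Icc_subset_Iic_self)
    fun x hx => (sq_le_one_iff_abs_le_one x).mpr (abs_le.mpr ⟨hx.1, hx.2.trans zero_le_one⟩)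

end Quartic

/-- The absolute value of the `2 ^ n`-th iterate of the critical point `0` of `quartic r`. -/
def critReturn (r : ℝ) (n : ℕ) : ℝ := -profile r n 0

lemma profile_apply_zero (r : ℝ) (n : ℕ) : profile r n 0 = -critReturn r n := (neg_neg _).symm

lemma profile_critReturn_sq (r : ℝ) (n : ℕ) :
    profile r n (critReturn r n ^ 2) = critReturn r (n + 1) := by
  rw [critReturn, critReturn, neg_sq, profile_succ, renorm, neg_neg]

/-- `[-b n, b n]` is the domain of the `n`-th renormalization of `quartic r`. -/
structure IsRenormTower (r : ℝ) (b : ℕ → ℝ) : Prop where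
  ne_zero : r ≠ 0
  zero_lt_one : b 0 < 1
  isReturnProfile : ∀ n, IsReturnProfile (profile r n) (b n)
  isFlipPoint : ∀ n, IsFlipPoint (profile r n) (b n) (b (n + 1))
  mul_le_critReturn : ∀ n, 11 / 10 * b (n + 1) ≤ critReturn r n

lemma IsInfinitelyRenormalizable.exists_isRenormTower {r : ℝ} (h : IsInfinitelyRenormalizable r) :
    ∃ b, IsRenormTower r b := by
  obtain ⟨b₀, hb₀, hL⟩ :=
    exists_isReturnProfile_profile_zero h.six_fifths_le h.le_two h.one_le_cubic
  obtain ⟨b, rfl, hb, hstep⟩ := exists_seq_of_step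
    (P := fun n b => IsReturnProfile (profile r n) b)
    (R := fun n b c => IsFlipPoint (profile r n) b c ∧ 11 / 10 * c ≤ critReturn r n) hL
    fun n b hb => hb.exists_renorm (h.profile_neg (n + 1)) (h.profile_le n)
  exact ⟨b, by linarith [h.six_fifths_le], hb₀, hb, fun n => (hstep n).1, fun n => (hstep n).2⟩

namespace IsRenormTower

variable {r : ℝ} {b : ℕ → ℝ}

lemma pos (T : IsRenormTower r b) (n : ℕ) : 0 < b n := (T.isReturnProfile n).pos

lemma critReturn_pos (T : IsRenormTower r b) (n : ℕ) : 0 < critReturn r n :=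
  neg_pos.mpr (T.isReturnProfile n).neg

lemma critReturn_lt (T : IsRenormTower r b) (n : ℕ) : critReturn r n < b n :=
  (T.isFlipPoint n).neg_lt

lemma lt_critReturn (T : IsRenormTower r b) (n : ℕ) : b (n + 1) < critReturn r n :=
  (T.isFlipPoint n).lt_neg

lemma critReturn_succ_lt (T : IsRenormTower r b) (n : ℕ) : critReturn r (n + 1) < critReturn r n :=
  (T.critReturn_lt (n + 1)).trans (T.lt_critReturn n)

lemma antitone (T : IsRenormTower r b) : Antitone b :=
  antitone_nat_of_succ_le fun n => (T.isFlipPoint n).lt.le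

lemma lt_one (T : IsRenormTower r b) (n : ℕ) : b n < 1 :=
  (T.antitone n.zero_le).trans_lt T.zero_lt_one

lemma tendsto_zero (T : IsRenormTower r b) : Tendsto b atTop (𝓝 0) :=
  tendsto_zero_of_frequently_le_mul (θ := 10 / 11) (fun n => (T.pos n).le) T.antitone
    (by norm_num) <| Frequently.of_forall fun n => by
      linarith [T.mul_le_critReturn n, T.critReturn_lt n]

lemma neg_critReturn_le_profile_sq (T : IsRenormTower r b) (n : ℕ) {x : ℝ} (hx : |x| ≤ b n) :
    -critReturn r n ≤ profile r n (x ^ 2) := by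
  simpa [profile_apply_zero] using (T.isReturnProfile n).apply_sq_le (x := 0) (by simp) hx

lemma profile_sq_le_neg (T : IsRenormTower r b) (n : ℕ) {x : ℝ} (hx : |x| ≤ b (n + 1)) :
    profile r n (x ^ 2) ≤ -b (n + 1) := by
  rw [← (T.isFlipPoint n).apply_sq]
  exact (T.isReturnProfile n).apply_sq_le (hx.trans (le_abs_self _))
    ((abs_of_pos (T.pos _)).trans_le (T.isFlipPoint n).lt.le)

lemma abs_quartic_iterate_le_critReturn (T : IsRenormTower r b) (n : ℕ) {x : ℝ}
    (hx : |x| ≤ critReturn r n) : |(quartic r)^[2 ^ n] x| ≤ critReturn r n := by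
  rw [abs_quartic_iterate_two_pow, abs_le]
  have hw : |critReturn r n| = critReturn r n := abs_of_pos (T.critReturn_pos n)
  have hle := (T.isReturnProfile n).apply_sq_le (hx.trans hw.ge)
    (hw.trans_le (T.critReturn_lt n).le)
  rw [profile_critReturn_sq] at hle
  exact ⟨T.neg_critReturn_le_profile_sq n (hx.trans (T.critReturn_lt n).le),
    hle.trans (T.critReturn_succ_lt n).le⟩

lemma abs_quartic_iterate_mem_Icc (T : IsRenormTower r b) (n : ℕ) {x : ℝ} (hx : |x| ≤ b (n + 1)) :
    |(quartic r)^[2 ^ n] x| ∈ Icc (b (n + 1)) (critReturn r n) := by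
  have hle := T.profile_sq_le_neg n hx
  rw [abs_quartic_iterate_two_pow, abs_of_neg (hle.trans_lt (neg_neg_of_pos (T.pos _)))]
  exact ⟨le_neg_of_le_neg hle,
    neg_le.mp (T.neg_critReturn_le_profile_sq n (hx.trans (T.antitone n.le_succ)))⟩

lemma mapsTo_quartic_iterate (T : IsRenormTower r b) {n k : ℕ} (hk : k < 2 ^ n) :
    MapsTo (quartic r)^[k] (Icc 0 (b n)) (Icc 0 1) ∨
      MapsTo (quartic r)^[k] (Icc 0 (b n)) (Icc (-1) 0) := by
  induction n generalizing k with
  | zero =>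
    obtain rfl : k = 0 := by simpa using hk
    exact .inl fun x hx => ⟨hx.1, hx.2.trans (T.lt_one 0).le⟩
  | succ n ih =>
    have habs : ∀ x ∈ Icc 0 (b (n + 1)), |x| ≤ b (n + 1) := fun x hx =>
      (abs_of_nonneg hx.1).trans_le hx.2
    rcases lt_trichotomy k (2 ^ n) with hlt | rfl | hgt
    · have hsub : Icc 0 (b (n + 1)) ⊆ Icc 0 (b n) := Icc_subset_Icc_right (T.antitone n.le_succ)
      exact (ih hlt).imp (·.mono_left hsub) (·.mono_left hsub)
    · have hmem : ∀ x ∈ Icc 0 (b (n + 1)), profile r n (x ^ 2) ∈ Icc (-1) 0 := fun x hx =>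
        ⟨by linarith [T.neg_critReturn_le_profile_sq n ((habs x hx).trans (T.antitone n.le_succ)),
            T.critReturn_lt n, T.lt_one n],
          by linarith [T.profile_sq_le_neg n (habs x hx), T.pos (n + 1)]⟩
      simp only [MapsTo, quartic_iterate_two_pow]
      rcases neg_one_pow_eq_or ℝ n with hsign | hsign <;> simp only [hsign, one_mul, neg_one_mul]
      · exact .inr hmem
      · exact .inl fun x hx => ⟨neg_nonneg.mpr (hmem x hx).2, neg_le.mp (hmem x hx).1⟩
    · obtain ⟨j, hj, rfl⟩ : ∃ j ≠ 0, k = j + 2 ^ n := ⟨k - 2 ^ n, by omega, by omega⟩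
      have hret : MapsTo (fun x => |(quartic r)^[2 ^ n] x|) (Icc 0 (b (n + 1))) (Icc 0 (b n)) :=
        fun x hx => ⟨abs_nonneg _,
          (T.abs_quartic_iterate_mem_Icc n (habs x hx)).2.trans (T.critReturn_lt n).le⟩
      have hiter : (quartic r)^[j + 2 ^ n] =
          (quartic r)^[j] ∘ fun x => |(quartic r)^[2 ^ n] x| := by
        ext x
        rw [Function.comp_apply, quartic_iterate_abs hj, Function.iterate_add_apply]
      rw [hiter]
      exact (ih (k := j) (by omega)).imp (·.comp hret) (·.comp hret)

lemma exists_isExpandingLap (T : IsRenormTower r b) (n : ℕ) :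
    ∀ k < 2 ^ n, ∃ J, IsExpandingLap (quartic r) J ∧ MapsTo (quartic r)^[k] (Icc 0 (b n)) J :=
  fun _ hk => (T.mapsTo_quartic_iterate hk).elim
    (fun h => ⟨_, isExpandingLap_quartic_Icc_zero_one T.ne_zero, h⟩)
    (fun h => ⟨_, isExpandingLap_quartic_Icc_neg_one_zero T.ne_zero, h⟩)

lemma isExpandingLap_iterate (T : IsRenormTower r b) {n k : ℕ} (hk : k ≤ 2 ^ n) :
    IsExpandingLap (quartic r)^[k] (Icc 0 (b n)) :=
  IsExpandingLap.iterate (T.exists_isExpandingLap n) hk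

end IsRenormTower

/-- The length of the `k`-th image of the half-interval `[0, b n]` under `quartic r`. -/
def pieceLength (r : ℝ) (b : ℕ → ℝ) (n k : ℕ) : ℝ := |(quartic r)^[k] (b n) - (quartic r)^[k] 0|

namespace IsRenormTower

variable {r : ℝ} {b : ℕ → ℝ}

lemma abs_iterate_sub_iterate_zero_le (T : IsRenormTower r b) {n k : ℕ} (hk : k < 2 ^ n) {x : ℝ}
    (hx : |x| ≤ b n) : |(quartic r)^[k] x - (quartic r)^[k] 0| ≤ pieceLength r b n k := by
  have habs : |(quartic r)^[k] |x| - (quartic r)^[k] 0| ≤ pieceLength r b n k :=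
    (T.isExpandingLap_iterate hk.le).abs_sub_le_abs_sub ⟨le_rfl, (T.pos n).le⟩ ⟨abs_nonneg x, hx⟩
      ⟨(T.pos n).le, le_rfl⟩ (abs_nonneg x) hx
  rcases eq_or_ne k 0 with rfl | hk₀
  · simpa using habs
  · rwa [quartic_iterate_abs hk₀] at habs

lemma pieceLength_succ_le (T : IsRenormTower r b) {n k : ℕ} (hk : k < 2 ^ n) :
    pieceLength r b (n + 1) k ≤ pieceLength r b n k :=
  T.abs_iterate_sub_iterate_zero_le hk
    ((abs_of_pos (T.pos _)).trans_le (T.antitone n.le_succ))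

lemma crossRatio_iterate_le (T : IsRenormTower r b) (n : ℕ) :
    crossRatio ((quartic r)^[2 ^ n] 0) ((quartic r)^[2 ^ n] (b (n + 1)))
      ((quartic r)^[2 ^ n] (critReturn r n)) ((quartic r)^[2 ^ n] (b n)) ≤ 440 := by
  have heq : crossRatio ((quartic r)^[2 ^ n] 0) ((quartic r)^[2 ^ n] (b (n + 1)))
      ((quartic r)^[2 ^ n] (critReturn r n)) ((quartic r)^[2 ^ n] (b n)) =
      crossRatio (-critReturn r n) (-b (n + 1)) (critReturn r (n + 1)) (b n) := by
    simp only [quartic_iterate_two_pow, profile_critReturn_sq, (T.isReturnProfile n).apply_sq,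
      (T.isFlipPoint n).apply_sq, zero_pow two_ne_zero, profile_apply_zero]
    rcases neg_one_pow_eq_or ℝ n with hsign | hsign
    · simp only [hsign, one_mul]
    · simp only [hsign, neg_one_mul, crossRatio_neg]
  rw [heq, crossRatio]
  have hbw := T.mul_le_critReturn n
  have hwb := T.critReturn_lt n
  have hwb' := T.critReturn_lt (n + 1)
  have hw' := T.critReturn_pos (n + 1)
  have hnum := mul_le_mul (show b n - -critReturn r n ≤ 2 * b n by linarith)
    (show critReturn r (n + 1) - -b (n + 1) ≤ 2 * b (n + 1) by linarith)
    (by linarith) (by linarith)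
  have hden := mul_le_mul (show 1 / 10 * b (n + 1) ≤ -b (n + 1) - -critReturn r n by linarith)
    (show 1 / 11 * b n ≤ b n - critReturn r (n + 1) by linarith) (by linarith) (by linarith)
  rw [div_le_iff₀ (mul_pos (by linarith) (by linarith))]
  linarith

/-- The second half-piece of generation `n + 1` is the middle part of a half-piece of
generation `n`, with definite space on both sides by the cross-ratio bound. -/
lemma pieceLength_succ_add_le (T : IsRenormTower r b) {n k : ℕ} (hk : k < 2 ^ n) :
    pieceLength r b (n + 1) (k + 2 ^ n) ≤ 10 / 11 * pieceLength r b n k := by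
  have hb' := T.pos (n + 1)
  have hbw := T.lt_critReturn n
  have hwb := T.critReturn_lt n
  have heq : pieceLength r b (n + 1) (k + 2 ^ n) =
      |(quartic r)^[k] (critReturn r n) - (quartic r)^[k] (b (n + 1))| := by
    rw [pieceLength, Function.iterate_add_apply, Function.iterate_add_apply]
    rcases eq_or_ne k 0 with rfl | hk₀
    · simp only [Function.iterate_zero, id, quartic_iterate_two_pow, (T.isFlipPoint n).apply_sq,
        zero_pow two_ne_zero, ← mul_sub, abs_mul, abs_neg_one_pow, one_mul, critReturn]
      congr 1
      ring
    · rw [← quartic_iterate_abs hk₀ ((quartic r)^[2 ^ n] (b (n + 1))),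
        ← quartic_iterate_abs hk₀ ((quartic r)^[2 ^ n] 0), abs_quartic_iterate_two_pow,
        abs_quartic_iterate_two_pow, (T.isFlipPoint n).apply_sq, abs_neg, abs_of_pos hb',
        zero_pow two_ne_zero, abs_of_neg (T.isReturnProfile n).neg, abs_sub_comm, critReturn]
  have hcr := (IsExpandingLap.crossRatio_iterate_le (T.exists_isExpandingLap n) hk.le
    ⟨le_rfl, by linarith⟩ ⟨hb'.le, by linarith⟩ ⟨by linarith, hwb.le⟩ ⟨by linarith, le_rfl⟩
    hb' hbw hwb).trans (T.crossRatio_iterate_le n)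
  rw [heq, pieceLength]
  exact (T.isExpandingLap_iterate hk.le).abs_sub_le_mul_abs_sub ⟨le_rfl, by linarith⟩
    ⟨hb'.le, by linarith⟩ ⟨by linarith, hwb.le⟩ ⟨by linarith, le_rfl⟩ hb' hbw hwb (by linarith)

end IsRenormTower

lemma zmod_val_eq_val_cast_or {n : ℕ} (i : ZMod (2 ^ (n + 1))) :
    i.val = (i.cast : ZMod (2 ^ n)).val ∨ i.val = (i.cast : ZMod (2 ^ n)).val + 2 ^ n := by
  have hi : i.val < 2 ^ n * 2 := i.val_lt.trans_eq (pow_succ 2 n)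
  rw [ZMod.cast_eq_val, ZMod.val_natCast]
  rcases lt_or_ge i.val (2 ^ n) with h | h
  · exact .inl (Nat.mod_eq_of_lt h).symm
  · rw [Nat.mod_eq_sub_mod h, Nat.mod_eq_of_lt (by omega)]
    omega

/-- The `i`-th interval in the `n`-th cycle of renormalization intervals of `quartic r`. -/
def renormPiece (r : ℝ) (n : ℕ) (i : ZMod (2 ^ n)) : Set ℝ :=
  (quartic r)^[i.val] '' Metric.closedBall 0 (critReturn r n)

namespace IsRenormTower

variable {r : ℝ} {b : ℕ → ℝ}

lemma mapsTo_closedBall_critReturn (T : IsRenormTower r b) (n : ℕ) : MapsTo (quartic r)^[2 ^ n]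
    (Metric.closedBall 0 (critReturn r n)) (Metric.closedBall 0 (critReturn r n)) :=
  fun _ hx => mem_closedBall_zero_iff.mpr <|
    T.abs_quartic_iterate_le_critReturn n (mem_closedBall_zero_iff.mp hx)

lemma renormPiece_succ_subset (T : IsRenormTower r b) (n : ℕ) (i : ZMod (2 ^ (n + 1))) :
    renormPiece r (n + 1) i ⊆ renormPiece r n i.cast := by
  have hsub := Metric.closedBall_subset_closedBall (x := (0 : ℝ)) (T.critReturn_succ_lt n).le
  unfold renormPiece
  rcases zmod_val_eq_val_cast_or i with hi | hi <;> rw [hi]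
  · exact image_mono hsub
  · rw [Function.iterate_add, image_comp]
    exact image_mono ((image_mono hsub).trans (T.mapsTo_closedBall_critReturn n).image_subset)

lemma mapsTo_renormPiece (T : IsRenormTower r b) (n : ℕ) (i : ZMod (2 ^ n)) :
    MapsTo (quartic r) (renormPiece r n i) (renormPiece r n (i + 1)) := by
  rintro _ ⟨u, hu, rfl⟩
  rw [← Function.iterate_succ_apply' (quartic r), renormPiece, ZMod.val_add,
    ZMod.val_one_eq_one_mod, Nat.add_mod_mod]
  rcases (Nat.succ_le_of_lt i.val_lt).lt_or_eq with hlt | heq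
  · rw [Nat.mod_eq_of_lt hlt]
    exact mem_image_of_mem _ hu
  · rw [← Nat.succ_eq_add_one, heq, Nat.mod_self]
    exact ⟨_, T.mapsTo_closedBall_critReturn n hu, rfl⟩

lemma disjoint_renormPiece (T : IsRenormTower r b) (n : ℕ) (i : ZMod (2 ^ (n + 1))) (hi : i ≠ 0)
    (hi₀ : (i.cast : ZMod (2 ^ n)) = 0) :
    Disjoint (renormPiece r (n + 1) 0) (renormPiece r (n + 1) i) := by
  have hval : i.val = 2 ^ n := by
    have := zmod_val_eq_val_cast_or i
    rw [hi₀, ZMod.val_zero, zero_add] at this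
    exact this.resolve_left ((ZMod.val_ne_zero i).mpr hi)
  rw [renormPiece, renormPiece, hval, ZMod.val_zero, Function.iterate_zero, image_id,
    disjoint_left]
  rintro _ hu ⟨v, hv, rfl⟩
  rw [mem_closedBall_zero_iff, Real.norm_eq_abs] at hu hv
  have := (T.abs_quartic_iterate_mem_Icc n (hv.trans (T.critReturn_lt (n + 1)).le)).1
  linarith [T.critReturn_lt (n + 1)]

lemma diam_renormPiece_le (T : IsRenormTower r b) (n : ℕ) (i : ZMod (2 ^ n)) :
    Metric.diam (renormPiece r n i) ≤ 2 * pieceLength r b n i.val := by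
  have hball : renormPiece r n i ⊆
      Metric.closedBall ((quartic r)^[i.val] 0) (pieceLength r b n i.val) := by
    rintro _ ⟨u, hu, rfl⟩
    exact T.abs_iterate_sub_iterate_zero_le i.val_lt
      ((mem_closedBall_zero_iff.mp hu).trans (T.critReturn_lt n).le)
  exact (Metric.diam_mono hball Metric.isBounded_closedBall).trans
    (Metric.diam_closedBall (abs_nonneg _))

lemma tendsto_pieceLength (T : IsRenormTower r b) (x : ℤ_[2]) :
    Tendsto (fun n => pieceLength r b n (PadicInt.toZModPow n x).val) atTop (𝓝 0) := by
  have hdigit : ∀ n, (PadicInt.toZModPow (n + 1) x).val = (PadicInt.toZModPow n x).val ∨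
      (PadicInt.toZModPow (n + 1) x).val = (PadicInt.toZModPow n x).val + 2 ^ n := fun n => by
    simpa only [PadicInt.cast_toZModPow n (n + 1) n.le_succ] using
      zmod_val_eq_val_cast_or (PadicInt.toZModPow (n + 1) x)
  have hone : ∀ n, (PadicInt.toZModPow (n + 1) x).val = (PadicInt.toZModPow n x).val + 2 ^ n →
      pieceLength r b (n + 1) (PadicInt.toZModPow (n + 1) x).val ≤
        10 / 11 * pieceLength r b n (PadicInt.toZModPow n x).val := fun n hn => by
    rw [hn]
    exact T.pieceLength_succ_add_le (ZMod.val_lt _)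
  have hanti : Antitone fun n => pieceLength r b n (PadicInt.toZModPow n x).val := by
    refine antitone_nat_of_succ_le fun n => ?_
    rcases hdigit n with hn | hn
    · rw [hn]
      exact T.pieceLength_succ_le (ZMod.val_lt _)
    · have : 0 ≤ pieceLength r b n (PadicInt.toZModPow n x).val := abs_nonneg _
      linarith [hone n hn]
  by_cases hfreq : ∃ᶠ n in atTop,
      (PadicInt.toZModPow (n + 1) x).val = (PadicInt.toZModPow n x).val + 2 ^ n
  · exact tendsto_zero_of_frequently_le_mul (fun n => abs_nonneg _) hanti (by norm_num)
      (hfreq.mono hone)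
  · obtain ⟨N, hN⟩ := eventually_atTop.mp (not_frequently.mp hfreq)
    have hconst : ∀ n ≥ N, (PadicInt.toZModPow n x).val = (PadicInt.toZModPow N x).val :=
      fun n hn => Nat.le_induction rfl
        (fun n hn ih => ((hdigit n).resolve_right (hN n hn)).trans ih) n hn
    have hlim := ((((continuous_quartic r).iterate (PadicInt.toZModPow N x).val).tendsto 0).comp
      T.tendsto_zero).sub_const ((quartic r)^[(PadicInt.toZModPow N x).val] 0) |>.abs
    rw [sub_self, abs_zero] at hlim
    refine hlim.congr' ?_
    filter_upwards [eventually_ge_atTop N] with n hn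
    rw [pieceLength, hconst n hn, Function.comp_apply]

lemma isAddingMachineTower (T : IsRenormTower r b) :
    IsAddingMachineTower 2 (quartic r) (renormPiece r) where
  isCompact n i := (isCompact_closedBall 0 _).image ((continuous_quartic r).iterate _)
  nonempty n i := (Metric.nonempty_closedBall.mpr (T.critReturn_pos n).le).image _
  nested := T.renormPiece_succ_subset
  mapsTo := T.mapsTo_renormPiece
  disjoint := T.disjoint_renormPiece
  tendsto_diam x := squeeze_zero (fun _ => Metric.diam_nonneg)
    (fun n => T.diam_renormPiece_le n _) (by simpa using (T.tendsto_pieceLength x).const_mul 2)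

lemma code_zero (T : IsRenormTower r b) : T.isAddingMachineTower.code 0 = 0 := by
  refine (T.isAddingMachineTower.eq_code fun n => ?_).symm
  rw [map_zero, renormPiece, ZMod.val_zero, Function.iterate_zero, image_id]
  exact Metric.mem_closedBall_self (T.critReturn_pos n).le

lemma abs_code_lt (T : IsRenormTower r b) (x : ℤ_[2]) : |T.isAddingMachineTower.code x| < b 0 := by
  have hmem := T.isAddingMachineTower.code_mem x 0
  have hval : (PadicInt.toZModPow 0 x).val = 0 := Nat.lt_one_iff.mp (ZMod.val_lt _)
  rw [renormPiece, hval, Function.iterate_zero, image_id] at hmem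
  exact (mem_closedBall_zero_iff.mp hmem).trans_lt (T.critReturn_lt 0)

end IsRenormTower

/-! ### The basin of attraction -/

lemma exists_le_of_forall_lt_self {α : Type*} [ConditionallyCompleteLinearOrder α]
    [TopologicalSpace α] [OrderTopology α] {g : α → α} {a b : α} {y : ℕ → α} (hg : Continuous g)
    (hlt : ∀ x ∈ Ico a b, g x < x) (hy₀ : y 0 < b)
    (hy : ∀ n, y n ∈ Ioo a b → y (n + 1) = g (y n) ∨ y (n + 1) ≤ a) : ∃ n, y n ≤ a := by
  by_contra! ha
  have hstep : ∀ n, y n < b → y (n + 1) = g (y n) := fun n hn =>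
    (hy n ⟨ha n, hn⟩).resolve_right (ha (n + 1)).not_ge
  have hb : ∀ n, y n < b := fun n => by
    induction n with
    | zero => exact hy₀
    | succ n ih => exact (hstep n ih).trans_lt ((hlt _ ⟨(ha n).le, ih⟩).trans ih)
  have hanti : Antitone y := antitone_nat_of_succ_le fun n =>
    (hstep n (hb n)).trans_le (hlt _ ⟨(ha n).le, hb n⟩).le
  have hbdd : BddBelow (range y) := ⟨a, forall_mem_range.mpr fun n => (ha n).le⟩
  have hlim := tendsto_atTop_ciInf hanti hbdd
  have hfix : ⨅ n, y n = g (⨅ n, y n) := by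
    refine tendsto_nhds_unique (hlim.comp (tendsto_add_atTop_nat 1))
      (((hg.tendsto _).comp hlim).congr fun n => (hstep n (hb n)).symm)
  exact (hlt _ ⟨le_ciInf fun n => (ha n).le, (ciInf_le hbdd 0).trans_lt hy₀⟩).ne' hfix

lemma frequently_lt_of_forall_exists_lt {u : ℕ → ℝ} (hu : ∀ k, 0 < u k)
    (h : ∀ ε > 0, ∃ k, u k < ε) {ε : ℝ} (hε : 0 < ε) : ∃ᶠ k in atTop, u k < ε := by
  refine frequently_atTop.mpr fun N => ?_
  have hsmall : ∀ᶠ δ in 𝓝[>] (0 : ℝ), ∀ k < N, δ < u k :=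
    (eventually_all_finite (finite_lt_nat N)).mpr fun k _ =>
      mem_of_superset (Ioo_mem_nhdsGT (hu k)) fun _ hδ => hδ.2
  obtain ⟨δ, hδN, hδ₀, hδε⟩ := (hsmall.and (Ioo_mem_nhdsGT hε)).exists
  obtain ⟨k, hk⟩ := h δ hδ₀
  exact ⟨k, not_lt.mp fun hkN => (hδN k hkN).not_gt hk, hk.trans hδε⟩

lemma countable_preimage_eval {R : Type*} [CommRing R] [IsDomain R] {p : Polynomial R}
    (hp : ∀ c, p ≠ Polynomial.C c) {S : Set R} (hS : S.Countable) :
    ((fun x => p.eval x) ⁻¹' S).Countable := by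
  rw [← biUnion_preimage_singleton]
  refine hS.biUnion fun c _ => ?_
  have hfinite := Polynomial.finite_setOfPred_isRoot (sub_ne_zero.mpr (hp c))
  refine (hfinite.subset fun x hx => ?_).countable
  simpa [sub_eq_zero] using hx

lemma countable_preimage_quartic {r : ℝ} (hr : r ≠ 0) {S : Set ℝ} (hS : S.Countable) :
    (quartic r ⁻¹' S).Countable := by
  have heq : quartic r = fun x =>
      (1 - Polynomial.C r * (1 - Polynomial.X ^ 2) ^ 2 : Polynomial ℝ).eval x := by
    ext x
    simp [quartic]
  rw [heq]
  refine countable_preimage_eval (fun c hc => hr ?_) hS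
  have h₀ := congrArg (Polynomial.eval 0) hc
  have h₁ := congrArg (Polynomial.eval 1) hc
  simp at h₀ h₁
  linarith

namespace IsRenormTower

variable {r : ℝ} {b : ℕ → ℝ}

lemma abs_quartic_lt (T : IsRenormTower r b) {x : ℝ} (hx : |x| < b 0) : |quartic r x| < b 0 := by
  have hle := T.neg_critReturn_le_profile_sq 0 hx.le
  have hlt := (T.isReturnProfile 0).strictMonoOn_sq ⟨abs_nonneg x, hx.le⟩ ⟨(T.pos 0).le, le_rfl⟩ hx
  simp only [sq_abs, (T.isReturnProfile 0).apply_sq] at hlt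
  exact abs_lt.mpr ⟨(neg_lt_neg (T.critReturn_lt 0)).trans_le hle, hlt⟩

lemma exists_abs_iterate_le (T : IsRenormTower r b) (n : ℕ) {x : ℝ} (hx : |x| < b n) :
    ∃ k, |(quartic r)^[k] x| ≤ b (n + 1) := by
  have hret := T.isReturnProfile n
  have hcont := hret.continuous
  obtain ⟨j, hj⟩ := exists_le_of_forall_lt_self (g := fun x => profile r n (x ^ 2))
    (a := b (n + 1)) (b := b n) (y := fun j => |((quartic r)^[2 ^ n])^[j] x|) (by fun_prop)
    (fun x hx => hret.apply_sq_lt_self ((T.pos _).le.trans hx.1) hx.2) hx fun j hj => by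
      have hle := hret.apply_sq_le (x := b (n + 1))
        (by simpa only [abs_abs, abs_of_pos (T.pos (n + 1))] using hj.1.le)
        ((abs_abs _).trans_le hj.2.le)
      rw [(T.isFlipPoint n).apply_sq, sq_abs] at hle
      simp only [Function.iterate_succ_apply', abs_quartic_iterate_two_pow, sq_abs]
      rcases le_total 0 (profile r n (((quartic r)^[2 ^ n])^[j] x ^ 2)) with hnonneg | hnonpos
      · exact .inl (abs_of_nonneg hnonneg)
      · exact .inr ((abs_of_nonpos hnonpos).trans_le (neg_le.mp hle))
  exact ⟨2 ^ n * j, by rwa [Function.iterate_mul]⟩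

lemma exists_abs_iterate_lt (T : IsRenormTower r b) {x : ℝ} (hx : |x| < b 0)
    (hne : ∀ k n, |(quartic r)^[k] x| ≠ b n) (n : ℕ) : ∃ k, |(quartic r)^[k] x| < b n := by
  induction n with
  | zero => exact ⟨0, hx⟩
  | succ n ih =>
    obtain ⟨k, hk⟩ := ih
    obtain ⟨j, hj⟩ := T.exists_abs_iterate_le n hk
    rw [← Function.iterate_add_apply] at hj
    exact ⟨j + k, hj.lt_of_ne (hne _ _)⟩

lemma countable_exceptional (T : IsRenormTower r b) :
    {x | ∃ k, (quartic r)^[k] x = 0 ∨ ∃ n, |(quartic r)^[k] x| = b n}.Countable := by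
  have hS : ({0} ∪ (range b ∪ range fun n => -b n)).Countable :=
    (countable_singleton _).union ((countable_range _).union (countable_range _))
  have hpre : ∀ k, ((quartic r)^[k] ⁻¹' ({0} ∪ (range b ∪ range fun n => -b n))).Countable := by
    intro k
    induction k with
    | zero => exact hS
    | succ k ih =>
      rw [Function.iterate_succ, preimage_comp]
      exact countable_preimage_quartic T.ne_zero ih
  refine (countable_iUnion hpre).mono ?_
  rintro x ⟨k, hk⟩
  refine mem_iUnion.mpr ⟨k, hk.imp_right ?_⟩
  rintro ⟨n, hn⟩
  exact (eq_or_eq_neg_of_abs_eq hn).imp (fun h => ⟨n, h.symm⟩) (fun h => ⟨n, h.symm⟩)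

lemma ae_frequently_abs_iterate_lt (T : IsRenormTower r b) :
    ∀ᵐ x, |x| < b 0 → ∀ ε > 0, ∃ᶠ k in atTop, |(quartic r)^[k] x| < ε := by
  filter_upwards [T.countable_exceptional.ae_notMem MeasureTheory.volume] with x hx hxb ε hε
  simp only [not_exists, not_or] at hx
  refine frequently_lt_of_forall_exists_lt (fun k => abs_pos.mpr (hx k).1) (fun δ hδ => ?_) hε
  obtain ⟨n, hn⟩ := (T.tendsto_zero.eventually (gt_mem_nhds hδ)).exists
  obtain ⟨k, hk⟩ := T.exists_abs_iterate_lt hxb (fun k => (hx k).2) n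
  exact ⟨k, hk.trans hn⟩

end IsRenormTower

lemma isPDCantorAttractor_range {f : ℝ × ℝ → ℝ × ℝ} {J : ℤ_[2] → ℝ × ℝ} (hJ : Continuous J)
    (hinj : Function.Injective J) (hf : ∀ x, f (J x) = J (x + 1)) {U : Set (ℝ × ℝ)}
    (hU : IsOpen U) (hJU : ∀ x, J x ∈ U) (hω : ∀ᵐ z ∂MeasureTheory.volume, z ∈ U →
      (omegaLimit atTop (fun n : ℕ => f^[n]) {z} ∩ range J).Nonempty) :
    IsPDCantorAttractor f (range J) := by
  let e : ℤ_[2] ≃ₜ range J := (hJ.isClosedEmbedding hinj).isEmbedding.toHomeomorph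
  refine ⟨isCompact_range hJ, ?_, ⟨e.symm, ?_⟩, U, hU, range_subset_iff.mpr hJU, hω⟩
  · rw [← range_comp, show f ∘ J = J ∘ (Equiv.addRight (1 : ℤ_[2])) from funext hf,
      (Equiv.addRight 1).surjective.range_comp]
  · rintro ⟨_, x, rfl⟩ hx
    have hex : e.symm ⟨J x, x, rfl⟩ = x := e.symm_apply_eq.mpr rfl
    simp only [hex, e.symm_apply_eq]
    exact Subtype.ext (hf x)

/-- The skew product over the base map `p` with fibre maps `q x`. -/
def skewProduct (p : ℝ → ℝ) (q : ℝ → ℝ → ℝ) (z : ℝ × ℝ) : ℝ × ℝ := (p z.1, q z.1 z.2)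

namespace IsRenormTower

variable {r : ℝ} {b : ℕ → ℝ} {q : ℝ → ℝ → ℝ} {y₀ δ θ : ℝ}

lemma abs_iterate_snd_sub_le (T : IsRenormTower r b) (hθ₀ : 0 ≤ θ) (hθ₁ : θ ≤ 1)
    (hq : ∀ x y, |x| < b 0 → |y - y₀| < δ → |q x y - y₀| ≤ θ * |y - y₀|) {z : ℝ × ℝ}
    (hz₁ : |z.1| < b 0) (hz₂ : |z.2 - y₀| < δ) (k : ℕ) :
    |((skewProduct (quartic r) q)^[k] z).2 - y₀| ≤ θ ^ k * |z.2 - y₀| := by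
  induction k generalizing z with
  | zero => simp
  | succ k ih =>
    have hstep := hq z.1 z.2 hz₁ hz₂
    have hδ : |q z.1 z.2 - y₀| < δ :=
      (hstep.trans (mul_le_of_le_one_left (abs_nonneg _) hθ₁)).trans_lt hz₂
    rw [Function.iterate_succ_apply]
    calc _ ≤ θ ^ k * |q z.1 z.2 - y₀| := ih (T.abs_quartic_lt hz₁) hδ
      _ ≤ θ ^ k * (θ * |z.2 - y₀|) := by gcongr
      _ = θ ^ (k + 1) * |z.2 - y₀| := by ring

lemma isPDCantorAttractor (T : IsRenormTower r b) (hδ : 0 < δ) (hθ₀ : 0 ≤ θ) (hθ₁ : θ < 1)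
    (hq₀ : ∀ x, q x y₀ = y₀)
    (hq : ∀ x y, |x| < b 0 → |y - y₀| < δ → |q x y - y₀| ≤ θ * |y - y₀|) :
    IsPDCantorAttractor (skewProduct (quartic r) q)
      (range fun x => (T.isAddingMachineTower.code x, y₀)) := by
  have hfst : ∀ k z, ((skewProduct (quartic r) q)^[k] z).1 = (quartic r)^[k] z.1 := fun k =>
    Function.Semiconj.iterate_right (f := Prod.fst) (fun _ => rfl) k
  refine isPDCantorAttractor_range (U := {z | |z.1| < b 0} ∩ {z | |z.2 - y₀| < δ})
    (T.isAddingMachineTower.continuous_code.prodMk continuous_const)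
    (fun x y hxy => T.isAddingMachineTower.injective_code (congrArg Prod.fst hxy))
    (fun x => by simp only [skewProduct, hq₀, T.isAddingMachineTower.code_add_one])
    ((isOpen_lt (by fun_prop) (by fun_prop)).inter (isOpen_lt (by fun_prop) (by fun_prop)))
    (fun x => ⟨T.abs_code_lt x, by simpa using hδ⟩) ?_
  filter_upwards [MeasureTheory.Measure.quasiMeasurePreserving_fst.ae
    T.ae_frequently_abs_iterate_lt] with z hz hzU
  refine ⟨(0, y₀), ?_, 0, by simp only [T.code_zero]⟩
  rw [mem_omegaLimit_iff_frequently]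
  intro V hV
  obtain ⟨ε, hε, hball⟩ := Metric.mem_nhds_iff.mp hV
  have hpow : Tendsto (fun k => θ ^ k * |z.2 - y₀|) atTop (𝓝 0) := by
    simpa using (tendsto_pow_atTop_nhds_zero_of_lt_one hθ₀ hθ₁).mul_const |z.2 - y₀|
  refine ((hz hzU.1 ε hε).and_eventually (hpow.eventually (gt_mem_nhds hε))).mono ?_
  rintro k ⟨hx, hy⟩
  refine ⟨z, rfl, hball ?_⟩
  rw [Metric.mem_ball, Prod.dist_eq]
  refine max_lt ?_ ?_
  · rwa [hfst, Real.dist_eq, sub_zero]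
  · exact (T.abs_iterate_snd_sub_le hθ₀ hθ₁.le hq hzU.1 hzU.2 k).trans_lt hy

end IsRenormTower

/-! ### Itineraries -/

lemma exists_forall_iterate_mem {X ι : Type*} [TopologicalSpace X] [T2Space X] {g : X → X}
    {S : ι → Set X} (hg : Continuous g) (hS : ∀ i, IsCompact (S i)) (hne : ∀ i, (S i).Nonempty)
    (hcov : ∀ i j, S j ⊆ g '' S i) (w : ℕ → ι) : ∃ z, ∀ n, g^[n] z ∈ S (w n) := by
  have hfin : ∀ N (w : ℕ → ι), ∃ z, ∀ n ≤ N, g^[n] z ∈ S (w n) := by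
    intro N
    induction N with
    | zero =>
      intro w
      obtain ⟨z, hz⟩ := hne (w 0)
      exact ⟨z, fun n hn => by rwa [Nat.le_zero.mp hn]⟩
    | succ N ih =>
      intro w
      obtain ⟨z, hz⟩ := ih fun n => w (n + 1)
      obtain ⟨y, hy, rfl⟩ := hcov (w 0) (w 1) (hz 0 N.zero_le)
      refine ⟨y, fun n hn => ?_⟩
      cases n with
      | zero => exact hy
      | succ n => exact hz n (Nat.le_of_succ_le_succ hn)
  let C : ℕ → Set X := fun N => ⋂ n ∈ Iic N, g^[n] ⁻¹' S (w n)
  have hC : ∀ N, IsClosed (C N) := fun N =>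
    isClosed_biInter fun n _ => (hS _).isClosed.preimage (hg.iterate n)
  obtain ⟨z, hz⟩ := IsCompact.nonempty_iInter_of_sequence_nonempty_isCompact_isClosed C
    (fun N => biInter_subset_biInter_left (Iic_subset_Iic.mpr N.le_succ))
    (fun N => (hfin N w).imp fun z hz => mem_iInter₂.mpr hz)
    ((hS (w 0)).of_isClosed_subset (hC 0) (biInter_subset_of_mem self_mem_Iic)) hC
  exact ⟨z, fun n => mem_iInter₂.mp (mem_iInter.mp hz n) n self_mem_Iic⟩

/-- A sequence over the alphabet `ι` is universal if every finite word occurs in it; a point with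
a universal itinerary has a dense orbit. -/
def IsUniversalWord {ι : Type*} (w : ℕ → ι) : Prop :=
  ∀ (N : ℕ) (e : ℕ → ι), ∃ M, ∀ j < N, w (M + j) = e j

lemma pow_mul_le_of_itinerary {X ι : Type*} {g : X → X} {S : ι → Set X} {d : X → X → ℝ} {L C : ℝ}
    (hL : 0 ≤ L) (hd : ∀ i, ∀ u ∈ S i, ∀ v ∈ S i, L * d u v ≤ d (g u) (g v)) (hC : ∀ u v, d u v ≤ C)
    {w : ℕ → ι} {N : ℕ} {u v : X} (hu : ∀ n < N, g^[n] u ∈ S (w n))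
    (hv : ∀ n < N, g^[n] v ∈ S (w n)) : L ^ N * d u v ≤ C := by
  induction N generalizing u v w with
  | zero => simpa using hC u v
  | succ N ih =>
    calc L ^ (N + 1) * d u v = L ^ N * (L * d u v) := by ring
      _ ≤ L ^ N * d (g u) (g v) :=
        mul_le_mul_of_nonneg_left (hd _ u (hu 0 N.succ_pos) v (hv 0 N.succ_pos)) (pow_nonneg hL N)
      _ ≤ C := ih (w := fun n => w (n + 1)) (fun n hn => hu (n + 1) (Nat.succ_lt_succ hn))
        fun n hn => hv (n + 1) (Nat.succ_lt_succ hn)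

lemma IsUniversalWord.exists_iterate_lt {X ι : Type*} {g : X → X} {S : ι → Set X}
    {d : X → X → ℝ} {L C : ℝ} (hL : 1 < L)
    (hd : ∀ i, ∀ u ∈ S i, ∀ v ∈ S i, L * d u v ≤ d (g u) (g v)) (hC : ∀ u v, d u v ≤ C)
    {w : ℕ → ι} (hw : IsUniversalWord w) {z : X} (hz : ∀ n, g^[n] z ∈ S (w n)) {y : X}
    (hy : ∀ n, ∃ i, g^[n] y ∈ S i) {ε : ℝ} (hε : 0 < ε) : ∃ n, d (g^[n] z) y < ε := by
  choose e he using hy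
  obtain ⟨N, hN⟩ := ((tendsto_pow_atTop_atTop_of_one_lt hL).eventually_gt_atTop (C / ε)).exists
  obtain ⟨M, hM⟩ := hw N e
  have hle := pow_mul_le_of_itinerary (zero_le_one.trans hL.le) hd hC (u := g^[M] z) (N := N)
    (fun n hn => by rw [← Function.iterate_add_apply, add_comm, ← hM n hn]; exact hz _)
    fun n _ => he n
  refine ⟨M, lt_of_mul_lt_mul_left (hle.trans_lt ?_) (pow_nonneg (zero_le_one.trans hL.le) N)⟩
  rwa [div_lt_iff₀ hε] at hN

/-- A universal binary sequence in which `true` is never rare: the block `[s², s² + 2s]` consists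
of the complemented binary digits of `s`, padded by `true`, so the wait for a `true` after time `n`
is at most `√n`. -/
def blockWord (n : ℕ) : Bool :=
  !Nat.testBit (Nat.sqrt n) (n - Nat.sqrt n * Nat.sqrt n)

lemma blockWord_mul_self_add {s j : ℕ} (hj : j ≤ s + s) :
    blockWord (s * s + j) = !Nat.testBit s j := by
  rw [blockWord, Nat.sqrt_add_eq s hj, Nat.add_sub_cancel_left]

lemma exists_le_sqrt_blockWord_eq_true (n : ℕ) : ∃ i ≤ Nat.sqrt n, blockWord (n + i) = true := by
  set s := Nat.sqrt n
  have hlo : s * s ≤ n := Nat.sqrt_le n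
  have hhi : n ≤ s * s + s + s := Nat.sqrt_le_add n
  have hbit : ∀ j, s ≤ j → Nat.testBit s j = false := fun j hj =>
    Nat.testBit_lt_two_pow (hj.trans_lt Nat.lt_two_pow_self)
  refine ⟨s - (n - s * s), Nat.sub_le _ _, ?_⟩
  rw [show n + (s - (n - s * s)) = s * s + max s (n - s * s) by omega,
    blockWord_mul_self_add (by omega), hbit _ (le_max_left _ _), Bool.not_false]

lemma isUniversalWord_blockWord : IsUniversalWord blockWord := by
  intro N e
  set s := Nat.ofBits (fun j : Fin (N + 1) => if (j : ℕ) = N then true else !e j)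
  have hs : ∀ j (hj : j < N + 1), Nat.testBit s j = if j = N then true else !e j := fun j hj =>
    Nat.testBit_ofBits_lt _ j hj
  have hN : N ≤ s :=
    Nat.lt_two_pow_self.le.trans <|
      Nat.ge_two_pow_of_testBit (by rw [hs N N.lt_succ_self, if_pos rfl])
  refine ⟨s * s, fun j hj => ?_⟩
  rw [blockWord_mul_self_add (by omega), hs j (by omega), if_neg hj.ne, Bool.not_not]

/-! ### Derivatives along orbits -/

lemma deriv_iterate_succ {f f' : ℝ → ℝ} (hf : ∀ x, HasDerivAt f (f' x) x) (n : ℕ) (x : ℝ) :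
    deriv f^[n + 1] x = f' (f^[n] x) * deriv f^[n] x := by
  have hn : Differentiable ℝ f^[n] := Differentiable.iterate (fun x => (hf x).differentiableAt) n
  rw [Function.iterate_succ']
  exact ((hf _).comp x (hn x).hasDerivAt).deriv

lemma pow_mul_le_abs_deriv_iterate_mul {f f' ρ : ℝ → ℝ} {L z : ℝ}
    (hf : ∀ x, HasDerivAt f (f' x) x) (hL : 0 ≤ L)
    (hρ : ∀ n, L * ρ (f (f^[n] z)) ≤ |f' (f^[n] z)| * ρ (f^[n] z)) (n : ℕ) :
    L ^ n * ρ (f^[n] z) ≤ |deriv f^[n] z| * ρ z := by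
  induction n with
  | zero => simp
  | succ n ih =>
    rw [deriv_iterate_succ hf, Function.iterate_succ_apply', abs_mul]
    calc _ = L ^ n * (L * ρ (f (f^[n] z))) := by ring
      _ ≤ L ^ n * (|f' (f^[n] z)| * ρ (f^[n] z)) :=
        mul_le_mul_of_nonneg_left (hρ n) (pow_nonneg hL n)
      _ = |f' (f^[n] z)| * (L ^ n * ρ (f^[n] z)) := by ring
      _ ≤ |f' (f^[n] z)| * (|deriv f^[n] z| * ρ z) := by gcongr
      _ = _ := by ring

lemma exp_le_mul_abs_deriv_iterate {f f' : ℝ → ℝ} {κ C L z : ℝ} (hf : ∀ x, HasDerivAt f (f' x) x)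
    (hκ : 0 ≤ κ) (hC : 0 ≤ C) (hL : 1 ≤ L) (hfL : ∀ n, |f' (f^[n] z)| ≤ L)
    (heven : ∀ m : ℕ, Real.exp (2 * κ * m) ≤ C * |deriv f^[2 * m] z|) (n : ℕ) :
    Real.exp (κ * n) ≤ C * L * |deriv f^[n] z| := by
  rcases Nat.even_or_odd' n with ⟨m, rfl | rfl⟩
  · calc Real.exp (κ * (2 * m : ℕ)) = Real.exp (2 * κ * m) := by push_cast; ring_nf
      _ ≤ C * |deriv f^[2 * m] z| := heven m
      _ ≤ C * L * |deriv f^[2 * m] z| := by gcongr; exact le_mul_of_one_le_right hC hL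
  · have hnext := heven (m + 1)
    rw [show 2 * (m + 1) = 2 * m + 1 + 1 by ring, deriv_iterate_succ hf, abs_mul] at hnext
    calc Real.exp (κ * (2 * m + 1 : ℕ)) ≤ Real.exp (2 * κ * (m + 1 : ℕ)) := by
          refine Real.exp_le_exp.mpr ?_
          push_cast
          linarith
      _ ≤ C * (|f' (f^[2 * m + 1] z)| * |deriv f^[2 * m + 1] z|) := hnext
      _ ≤ C * (L * |deriv f^[2 * m + 1] z|) := by gcongr; exact hfL _
      _ = _ := by ring

/-! ### A Misiurewicz quadratic map -/

/-- The quadratic family `y ↦ y² - c`, normalized so that `-t` is a fixed point. -/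
def bandMap (t y : ℝ) : ℝ := y ^ 2 - t - t ^ 2

/-- The second iterate of `bandMap t`. -/
def bandReturn (t y : ℝ) : ℝ := bandMap t (bandMap t y)

lemma bandReturn_iterate (t : ℝ) (n : ℕ) : (bandReturn t)^[n] = (bandMap t)^[2 * n] := by
  rw [Function.iterate_mul]; rfl

lemma bandReturn_neg (t y : ℝ) : bandReturn t (-y) = bandReturn t y := by
  simp only [bandReturn, bandMap, neg_sq]

lemma hasDerivAt_bandMap (t y : ℝ) : HasDerivAt (bandMap t) (2 * y) y :=
  (((hasDerivAt_pow 2 y).sub_const t).sub_const (t ^ 2)).congr_deriv (by simp)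

lemma hasDerivAt_bandReturn (t y : ℝ) : HasDerivAt (bandReturn t) (4 * y * bandMap t y) y :=
  ((hasDerivAt_bandMap t (bandMap t y)).comp y (hasDerivAt_bandMap t y)).congr_deriv (by ring)

lemma continuous_bandMap (t : ℝ) : Continuous (bandMap t) := by unfold bandMap; fun_prop

lemma continuous_bandReturn (t : ℝ) : Continuous (bandReturn t) :=
  (continuous_bandMap t).comp (continuous_bandMap t)

lemma bandReturn_add (t y : ℝ) :
    bandReturn t y + t = (t ^ 2 - y ^ 2) * (t ^ 2 + 2 * t - y ^ 2) := by
  unfold bandReturn bandMap; ring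

/-- The band merging parameter: the critical orbit `0 ↦ -t - t² ↦ t ↦ -t` of `bandMap t` lands on
a repelling fixed point. -/
structure IsBandMerging (t : ℝ) : Prop where
  eq_two : t ^ 3 + 2 * t ^ 2 = 2
  gt : 83 / 100 < t
  lt : t < 84 / 100

lemma exists_isBandMerging : ∃ t, IsBandMerging t := by
  obtain ⟨t, ht, heq⟩ := intermediate_value_Ioo (a := (83 / 100 : ℝ)) (b := 84 / 100)
    (f := fun t => t ^ 3 + 2 * t ^ 2) (by norm_num) (by fun_prop)
    (show (2 : ℝ) ∈ Ioo _ _ by constructor <;> norm_num)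
  exact ⟨t, heq, ht.1, ht.2⟩

/-- The interval `[-t, t]`, which `bandReturn t` folds onto itself, is cut at the turning point. -/
def lap (t : ℝ) (w : Bool) : Set ℝ := cond w (Icc 0 t) (Icc (-t) 0)

lemma abs_le_of_mem_lap {t y : ℝ} {w : Bool} (hy : y ∈ lap t w) : |y| ≤ t := by
  cases w <;> exact abs_le.mpr ⟨by linarith [hy.1, hy.2], by linarith [hy.1, hy.2]⟩

lemma exists_mem_lap {t y : ℝ} (hy : |y| ≤ t) : ∃ w, y ∈ lap t w := by
  rw [abs_le] at hy
  rcases le_total 0 y with h | h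
  · exact ⟨true, h, hy.2⟩
  · exact ⟨false, hy.1, h⟩

/-- The coordinate on `[-t, t]` in which `bandReturn t` is uniformly expanding. It straightens the
folding map exactly when that map is a Chebyshev polynomial. -/
noncomputable def angle (t y : ℝ) : ℝ := Real.arcsin (y / t)

lemma angle_neg (t y : ℝ) : angle t (-y) = -angle t y := by
  rw [angle, neg_div, Real.arcsin_neg, angle]

lemma continuous_angle (t : ℝ) : Continuous (angle t) :=
  Real.continuous_arcsin.comp (continuous_id.div_const t)

lemma abs_angle_sub_angle_le (t u v : ℝ) : |angle t u - angle t v| ≤ Real.pi := by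
  have hu := Real.arcsin_mem_Icc (u / t)
  have hv := Real.arcsin_mem_Icc (v / t)
  rw [angle, angle, abs_le]
  constructor <;> linarith [hu.1, hu.2, hv.1, hv.2]

lemma mul_sin_angle {t y : ℝ} (ht : 0 < t) (hy : |y| ≤ t) : t * Real.sin (angle t y) = y := by
  rw [abs_le] at hy
  rw [angle, Real.sin_arcsin (by rw [le_div_iff₀ ht]; linarith) (by rw [div_le_one ht]; exact hy.2),
    mul_div_cancel₀ _ ht.ne']

lemma abs_sub_le_mul_abs_angle_sub {t u v : ℝ} (ht : 0 < t) (hu : |u| ≤ t) (hv : |v| ≤ t) :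
    |u - v| ≤ t * |angle t u - angle t v| := by
  nth_rw 1 [← mul_sin_angle ht hu, ← mul_sin_angle ht hv]
  rw [← mul_sub, abs_mul, abs_of_pos ht]
  refine mul_le_mul_of_nonneg_left ?_ ht.le
  simpa [Real.dist_eq] using Real.lipschitzWith_sin.dist_le_mul (angle t u) (angle t v)

lemma hasDerivAt_angle {t y : ℝ} (hy : |y| < t) :
    HasDerivAt (angle t) (√(t ^ 2 - y ^ 2))⁻¹ y := by
  have ht : 0 < t := (abs_nonneg y).trans_lt hy
  have hyt := abs_lt.mp hy
  have hsqrt : √(1 - (y / t) ^ 2) = √(t ^ 2 - y ^ 2) / t := by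
    rw [show 1 - (y / t) ^ 2 = (t ^ 2 - y ^ 2) / t ^ 2 by field_simp,
      Real.sqrt_div' _ (sq_nonneg t), Real.sqrt_sq ht.le]
  refine ((Real.hasDerivAt_arcsin ?_ ?_).comp y ((hasDerivAt_id y).div_const t)).congr_deriv ?_
  · rw [Ne, id, div_eq_iff ht.ne']; linarith
  · rw [Ne, id, div_eq_iff ht.ne']; linarith
  · rw [id, hsqrt]; field_simp

lemma monotoneOn_angle_comp_sub {g g' : ℝ → ℝ} {t L : ℝ} {s : Set ℝ} (hs : Convex ℝ s)
    (hg : ∀ y, HasDerivAt g (g' y) y) (hst : ∀ y ∈ interior s, |y| < t)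
    (hgt : ∀ y ∈ interior s, |g y| < t)
    (hexp : ∀ y ∈ interior s, L * √(t ^ 2 - g y ^ 2) ≤ g' y * √(t ^ 2 - y ^ 2)) :
    MonotoneOn (fun y => angle t (g y) - L * angle t y) s := by
  have hderiv : ∀ y ∈ interior s, HasDerivAt (fun y => angle t (g y) - L * angle t y)
      ((√(t ^ 2 - g y ^ 2))⁻¹ * g' y - L * (√(t ^ 2 - y ^ 2))⁻¹) y := fun y hy =>
    ((hasDerivAt_angle (hgt y hy)).comp y (hg y)).sub ((hasDerivAt_angle (hst y hy)).const_mul L)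
  have hgc : Continuous g := continuous_iff_continuousAt.mpr fun y => (hg y).continuousAt
  refine monotoneOn_of_hasDerivWithinAt_nonneg hs
    (((continuous_angle t).comp hgc).sub ((continuous_angle t).const_mul L)).continuousOn
    (fun y hy => (hderiv y hy).hasDerivWithinAt) fun y hy => ?_
  have hsqrt : ∀ {u}, |u| < t → 0 < √(t ^ 2 - u ^ 2) := fun hu =>
    Real.sqrt_pos.mpr (sub_pos.mpr (sq_lt_sq' (neg_lt_of_abs_lt hu) (lt_of_abs_lt hu)))
  rw [sub_nonneg, ← div_eq_mul_inv, inv_mul_eq_div,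
    div_le_div_iff₀ (hsqrt (hst y hy)) (hsqrt (hgt y hy))]
  exact hexp y hy

namespace IsBandMerging

variable {t : ℝ}

lemma pos (T : IsBandMerging t) : 0 < t := by linarith [T.gt]

lemma sub_bandReturn (T : IsBandMerging t) (y : ℝ) :
    t - bandReturn t y = y ^ 2 * (2 * t + 2 * t ^ 2 - y ^ 2) := by
  unfold bandReturn bandMap
  linear_combination (-t) * T.eq_two

lemma sq_le (T : IsBandMerging t) {y : ℝ} (hy : |y| ≤ t) : y ^ 2 ≤ t ^ 2 :=
  sq_le_sq.mpr (by rwa [abs_of_pos T.pos])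

lemma abs_bandReturn_le (T : IsBandMerging t) {y : ℝ} (hy : |y| ≤ t) : |bandReturn t y| ≤ t := by
  have ht := T.pos
  have hsq := T.sq_le hy
  have hlo : 0 ≤ bandReturn t y + t := by
    rw [bandReturn_add]
    exact mul_nonneg (by linarith) (by linarith)
  have hhi : 0 ≤ t - bandReturn t y := by
    rw [T.sub_bandReturn]
    exact mul_nonneg (sq_nonneg y) (by nlinarith)
  exact abs_le.mpr ⟨by linarith, by linarith⟩

lemma abs_bandReturn_lt (T : IsBandMerging t) {y : ℝ} (hy : |y| < t) (hy₀ : y ≠ 0) :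
    |bandReturn t y| < t := by
  have ht := T.pos
  have hsq : y ^ 2 < t ^ 2 := sq_lt_sq' (neg_lt_of_abs_lt hy) (lt_of_abs_lt hy)
  have hlo : 0 < bandReturn t y + t := by
    rw [bandReturn_add]
    exact mul_pos (by linarith) (by linarith)
  have hhi : 0 < t - bandReturn t y := by
    rw [T.sub_bandReturn]
    exact mul_pos (by positivity) (by nlinarith)
  exact abs_lt.mpr ⟨by linarith, by linarith⟩

lemma abs_bandReturn_iterate_le (T : IsBandMerging t) {y : ℝ} (hy : |y| ≤ t) (n : ℕ) :
    |(bandReturn t)^[n] y| ≤ t :=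
  (show MapsTo (bandReturn t) {y | |y| ≤ t} {y | |y| ≤ t} from fun _ => T.abs_bandReturn_le).iterate
    n hy

lemma mul_sq_sub_sq_bandReturn_le (T : IsBandMerging t) {y : ℝ} (hy : |y| ≤ t) :
    (8 / 5) ^ 2 * (t ^ 2 - bandReturn t y ^ 2) ≤ (4 * y * bandMap t y) ^ 2 * (t ^ 2 - y ^ 2) := by
  have ht := T.pos
  have hσ := sub_nonneg.mpr (T.sq_le hy)
  set σ := t ^ 2 - y ^ 2 with hσ_def
  have hy_sq : y ^ 2 = t ^ 2 - σ := by ring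
  have hmap : bandMap t y = -(t + σ) := by unfold bandMap; ring
  have hreturn : t ^ 2 - bandReturn t y ^ 2 = y ^ 2 * σ * ((2 * t + σ) * (2 * t + t ^ 2 + σ)) := by
    calc _ = (bandReturn t y + t) * (t - bandReturn t y) := by ring
      _ = _ := by rw [bandReturn_add, T.sub_bandReturn, ← hσ_def, hy_sq]; ring
  have hmain : (8 / 5) ^ 2 * ((2 * t + σ) * (2 * t + t ^ 2 + σ)) ≤ 16 * (t + σ) ^ 2 := by
    have hlt := T.lt
    have ha : 0 ≤ t ^ 2 * (16 - 128 / 25 * (2 + t)) := mul_nonneg (sq_nonneg t) (by linarith)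
    have hb : 0 ≤ σ * (t * (32 - 256 / 25 - 64 / 25 * t)) :=
      mul_nonneg hσ (mul_nonneg ht.le (by linarith))
    linarith [sq_nonneg σ]
  calc _ = y ^ 2 * σ * ((8 / 5) ^ 2 * ((2 * t + σ) * (2 * t + t ^ 2 + σ))) := by rw [hreturn]; ring
    _ ≤ y ^ 2 * σ * (16 * (t + σ) ^ 2) := by gcongr
    _ = _ := by rw [hmap]; ring

lemma mul_sqrt_bandReturn_le (T : IsBandMerging t) {y : ℝ} (hy : |y| ≤ t) :
    8 / 5 * √(t ^ 2 - bandReturn t y ^ 2) ≤ |4 * y * bandMap t y| * √(t ^ 2 - y ^ 2) := by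
  refine (pow_le_pow_iff_left₀ (by positivity) (by positivity) two_ne_zero).mp ?_
  rw [mul_pow, mul_pow, sq_abs, Real.sq_sqrt (sub_nonneg.mpr (T.sq_le hy)),
    Real.sq_sqrt (sub_nonneg.mpr (T.sq_le (T.abs_bandReturn_le hy)))]
  exact T.mul_sq_sub_sq_bandReturn_le hy

lemma mul_abs_angle_sub_le (T : IsBandMerging t) (w : Bool) {u v : ℝ} (hu : u ∈ lap t w)
    (hv : v ∈ lap t w) :
    8 / 5 * |angle t u - angle t v| ≤ |angle t (bandReturn t u) - angle t (bandReturn t v)| := by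
  have hmono : MonotoneOn (fun y => angle t (bandReturn t y) - 8 / 5 * angle t y)
      (Icc (-t) 0) := by
    refine monotoneOn_angle_comp_sub (convex_Icc _ _) (hasDerivAt_bandReturn t) ?_ ?_ ?_ <;>
      rw [interior_Icc] <;> intro y hy <;> have hyt : |y| < t := abs_lt.mpr ⟨hy.1, hy.2.trans T.pos⟩
    · exact hyt
    · exact T.abs_bandReturn_lt hyt hy.2.ne
    · have hneg : bandMap t y ≤ 0 := by
        unfold bandMap; linarith [T.sq_le hyt.le, T.pos]
      have hnonneg := mul_nonneg_of_nonpos_of_nonpos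
        (mul_nonpos_of_nonneg_of_nonpos zero_le_four hy.2.le) hneg
      simpa only [abs_of_nonneg hnonneg] using T.mul_sqrt_bandReturn_le hyt.le
  have hangle : Monotone (angle t) := fun u v huv =>
    Real.monotone_arcsin (div_le_div_of_nonneg_right huv T.pos.le)
  wlog huv : v ≤ u generalizing u v
  · rw [abs_sub_comm, abs_sub_comm (angle t (bandReturn t u))]
    exact this hv hu (le_of_not_ge huv)
  cases w with
  | false =>
    have hdiff := hmono hv hu huv
    simp only at hdiff
    rw [abs_of_nonneg (sub_nonneg.mpr (hangle huv))]
    exact le_trans (by linarith) (le_abs_self _)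
  | true =>
    have hdiff := hmono (a := -u) (b := -v) ⟨neg_le_neg hu.2, neg_nonpos.mpr hu.1⟩
      ⟨neg_le_neg hv.2, neg_nonpos.mpr hv.1⟩ (neg_le_neg huv)
    simp only [bandReturn_neg, angle_neg] at hdiff
    rw [abs_of_nonneg (sub_nonneg.mpr (hangle huv))]
    exact le_trans (by linarith) (neg_le_abs _)

lemma lap_subset_image_lap (T : IsBandMerging t) (w w' : Bool) :
    lap t w' ⊆ bandReturn t '' lap t w := by
  intro z hz
  have hz := abs_le.mp (abs_le_of_mem_lap hz)
  have hzero : bandReturn t 0 = t := by linarith [T.sub_bandReturn 0]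
  have hfix : bandReturn t (-t) = -t := by linarith [bandReturn_add t (-t)]
  obtain ⟨y, hy, rfl⟩ := intermediate_value_Icc (neg_nonpos.mpr T.pos.le)
    (continuous_bandReturn t).continuousOn (show z ∈ Icc _ _ by rwa [hzero, hfix])
  cases w with
  | false => exact ⟨y, hy, rfl⟩
  | true => exact ⟨-y, ⟨neg_nonneg.mpr hy.2, neg_le.mp hy.1⟩, bandReturn_neg t y⟩

lemma exists_itinerary (T : IsBandMerging t) (w : ℕ → Bool) :
    ∃ z, ∀ n, (bandReturn t)^[n] z ∈ lap t (w n) := by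
  refine exists_forall_iterate_mem (continuous_bandReturn t) (fun w => ?_) (fun w => ⟨0, ?_⟩)
    T.lap_subset_image_lap w
  · cases w <;> exact isCompact_Icc
  · cases w <;> simp [lap, T.pos.le]

lemma Icc_neg_subset_closure_range_iterate (T : IsBandMerging t) {w : ℕ → Bool}
    (hw : IsUniversalWord w) {z : ℝ} (hz : ∀ n, (bandReturn t)^[n] z ∈ lap t (w n)) :
    Icc (-t) t ⊆ closure (range fun n => (bandMap t)^[n] z) := by
  intro y hy
  replace hy := abs_le.mpr hy
  refine Metric.mem_closure_range_iff.mpr fun ε hε => ?_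
  obtain ⟨n, hn⟩ := hw.exists_iterate_lt (L := 8 / 5) (d := fun u v => |angle t u - angle t v|)
    (by norm_num) (fun w _ hu _ hv => T.mul_abs_angle_sub_le w hu hv) (abs_angle_sub_angle_le t) hz
    (fun n => exists_mem_lap (T.abs_bandReturn_iterate_le hy n)) hε
  refine ⟨2 * n, ?_⟩
  rw [← bandReturn_iterate, dist_comm, Real.dist_eq]
  refine (abs_sub_le_mul_abs_angle_sub T.pos (abs_le_of_mem_lap (hz n)) hy).trans_lt
    ((mul_le_of_le_one_left (abs_nonneg _) ?_).trans_lt hn)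
  linarith [T.lt]

lemma Icc_subset_closure_range_iterate (T : IsBandMerging t) {w : ℕ → Bool} (hw : IsUniversalWord w)
    {z : ℝ} (hz : ∀ n, (bandReturn t)^[n] z ∈ lap t (w n)) :
    Icc (-t - t ^ 2) t ⊆ closure (range fun n => (bandMap t)^[n] z) := by
  intro y hy
  rcases le_or_gt (-t) y with hty | hty
  · exact T.Icc_neg_subset_closure_range_iterate hw hz ⟨hty, hy.2⟩
  · have hroot : bandMap t (√(y + t + t ^ 2)) = y := by
      rw [bandMap, Real.sq_sqrt (by linarith [hy.1])]
      ring
    have hmem : √(y + t + t ^ 2) ∈ Icc (-t) t :=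
      ⟨by linarith [Real.sqrt_nonneg (y + t + t ^ 2), T.pos],
        Real.sqrt_le_iff.mpr ⟨T.pos.le, by linarith⟩⟩
    rw [← hroot]
    refine map_mem_closure (continuous_bandMap t)
      (T.Icc_neg_subset_closure_range_iterate hw hz hmem) ?_
    rintro _ ⟨n, rfl⟩
    exact ⟨n + 1, Function.iterate_succ_apply' _ _ _⟩

lemma bandReturn_add_le (T : IsBandMerging t) {y : ℝ} (hy : |y| ≤ t) :
    bandReturn t y + t ≤ 5 * (t + y) ∧ bandReturn t y + t ≤ 5 * (t - y) := by
  have hlt := T.lt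
  have hgt := T.gt
  obtain ⟨hlo, hhi⟩ := abs_le.mp hy
  have hfactor : bandReturn t y + t = (t + y) * (t - y) * (t ^ 2 + 2 * t - y ^ 2) := by
    rw [bandReturn_add]; ring
  have hright : (t - y) * (t ^ 2 + 2 * t - y ^ 2) ≤ 5 := by nlinarith
  have hleft : (t + y) * (t ^ 2 + 2 * t - y ^ 2) ≤ 5 := by nlinarith
  rw [hfactor]
  constructor <;> nlinarith

lemma le_pow_mul_add (T : IsBandMerging t) {i : ℕ} {y : ℝ} (hy : |y| ≤ t)
    (hi : 0 ≤ (bandReturn t)^[i] y) : t ≤ 5 ^ i * (t + y) := by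
  induction i generalizing y with
  | zero => simpa using hi
  | succ i ih =>
    calc t ≤ 5 ^ i * (t + bandReturn t y) := ih (T.abs_bandReturn_le hy) hi
      _ ≤ 5 ^ i * (5 * (t + y)) := by
        rw [add_comm t]
        exact mul_le_mul_of_nonneg_left (T.bandReturn_add_le hy).1 (by positivity)
      _ = 5 ^ (i + 1) * (t + y) := by ring

lemma le_pow_sqrt_mul_add (T : IsBandMerging t) {z : ℝ}
    (hz : ∀ n, (bandReturn t)^[n] z ∈ lap t (blockWord n)) (n : ℕ) :
    t ≤ 5 ^ Nat.sqrt n * (t + (bandReturn t)^[n] z) := by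
  obtain ⟨i, hi, htrue⟩ := exists_le_sqrt_blockWord_eq_true n
  have hreturn := hz (n + i)
  rw [htrue, add_comm, Function.iterate_add_apply] at hreturn
  have habs := abs_le_of_mem_lap (hz n)
  refine (T.le_pow_mul_add habs hreturn.1).trans ?_
  gcongr
  · linarith [neg_le_of_abs_le habs]
  · norm_num

lemma le_pow_sqrt_mul_sqrt (T : IsBandMerging t) {z : ℝ}
    (hz : ∀ n, (bandReturn t)^[n] z ∈ lap t (blockWord n)) (n : ℕ) :
    t ≤ 5 ^ (Nat.sqrt (n + 1) + 1) * √(t ^ 2 - (bandReturn t)^[n] z ^ 2) := by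
  have hy := abs_le_of_mem_lap (hz n)
  have hadd := T.le_pow_sqrt_mul_add hz n
  have hnext := T.le_pow_sqrt_mul_add hz (n + 1)
  rw [Function.iterate_succ_apply'] at hnext
  set y := (bandReturn t)^[n] z
  set P : ℝ := 5 ^ (Nat.sqrt (n + 1) + 1) with hP
  have hlo := (abs_le.mp hy).1
  have hleft : t ≤ P * (t + y) := by
    refine hadd.trans (mul_le_mul_of_nonneg_right ?_ (by linarith))
    exact pow_le_pow_right₀ (by norm_num) ((Nat.sqrt_le_sqrt n.le_succ).trans (Nat.le_succ _))
  have hright : t ≤ P * (t - y) := by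
    calc t ≤ 5 ^ Nat.sqrt (n + 1) * (t + bandReturn t y) := hnext
      _ ≤ 5 ^ Nat.sqrt (n + 1) * (5 * (t - y)) := by
        rw [add_comm t]
        exact mul_le_mul_of_nonneg_left (T.bandReturn_add_le hy).2 (by positivity)
      _ = P * (t - y) := by rw [hP]; ring
  refine le_of_sq_le_sq ?_ (by positivity)
  rw [mul_pow, Real.sq_sqrt (sub_nonneg.mpr (T.sq_le hy))]
  calc t ^ 2 = t * t := sq t
    _ ≤ P * (t + y) * (P * (t - y)) := mul_le_mul hleft hright T.pos.le (T.pos.le.trans hleft)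
    _ = P ^ 2 * (t ^ 2 - y ^ 2) := by ring

end IsBandMerging

lemma five_pow_sqrt_le (n : ℕ) : (5 : ℝ) ^ (Nat.sqrt (n + 1) + 1) ≤ (4 / 3) ^ (n + 22) := by
  have hexp : 6 * (Nat.sqrt (n + 1) + 1) ≤ n + 22 := by
    have hle := Nat.sqrt_le (n + 1)
    zify at hle ⊢
    nlinarith [sq_nonneg ((Nat.sqrt (n + 1) : ℤ) - 3)]
  calc (5 : ℝ) ^ (Nat.sqrt (n + 1) + 1) ≤ ((4 / 3) ^ 6) ^ (Nat.sqrt (n + 1) + 1) := by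
        gcongr; norm_num
    _ = (4 / 3) ^ (6 * (Nat.sqrt (n + 1) + 1)) := (pow_mul _ _ _).symm
    _ ≤ (4 / 3) ^ (n + 22) := pow_le_pow_right₀ (by norm_num) hexp

namespace IsBandMerging

variable {t : ℝ}

lemma pow_le_mul_abs_deriv (T : IsBandMerging t) {z : ℝ}
    (hz : ∀ n, (bandReturn t)^[n] z ∈ lap t (blockWord n)) (n : ℕ) :
    (6 / 5) ^ n ≤ (4 / 3) ^ 22 * |deriv (bandMap t)^[2 * n] z| := by
  have hgrowth := pow_mul_le_abs_deriv_iterate_mul (f := bandReturn t) (L := 8 / 5) (z := z)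
    (ρ := fun y => √(t ^ 2 - y ^ 2)) (hasDerivAt_bandReturn t) (by norm_num)
    (fun n => T.mul_sqrt_bandReturn_le (abs_le_of_mem_lap (hz n))) n
  rw [bandReturn_iterate] at hgrowth
  set D := |deriv (bandMap t)^[2 * n] z|
  have hsqrt : √(t ^ 2 - z ^ 2) ≤ t :=
    Real.sqrt_le_iff.mpr ⟨T.pos.le, sub_le_self _ (sq_nonneg z)⟩
  have hfar := T.le_pow_sqrt_mul_sqrt hz n
  rw [bandReturn_iterate] at hfar
  set ρ := √(t ^ 2 - (bandMap t)^[2 * n] z ^ 2)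
  have hpow : t * (8 / 5) ^ n ≤ t * ((4 / 3) ^ (n + 22) * D) := by
    calc t * (8 / 5) ^ n ≤ 5 ^ (Nat.sqrt (n + 1) + 1) * ρ * (8 / 5) ^ n := by gcongr
      _ ≤ (4 / 3) ^ (n + 22) * ((8 / 5) ^ n * ρ) := by
        rw [mul_assoc, mul_comm ρ]
        gcongr
        exact five_pow_sqrt_le n
      _ ≤ (4 / 3) ^ (n + 22) * (D * t) := by
        refine mul_le_mul_of_nonneg_left ?_ (by positivity)
        exact hgrowth.trans (mul_le_mul_of_nonneg_left hsqrt (abs_nonneg _))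
      _ = t * ((4 / 3) ^ (n + 22) * D) := by ring
  refine le_of_mul_le_mul_left ?_ (show (0 : ℝ) < (4 / 3) ^ n by positivity)
  calc (4 / 3 : ℝ) ^ n * (6 / 5) ^ n = (8 / 5) ^ n := by rw [← mul_pow]; norm_num
    _ ≤ (4 / 3) ^ (n + 22) * D := le_of_mul_le_mul_left hpow T.pos
    _ = (4 / 3) ^ n * ((4 / 3) ^ 22 * D) := by ring

lemma abs_bandMap_le_two (T : IsBandMerging t) {y : ℝ} (hy : |y| ≤ t) : |bandMap t y| ≤ 2 := by
  have hsq := T.sq_le hy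
  have hlt := T.lt
  have hgt := T.gt
  rw [bandMap, abs_le]
  constructor <;> nlinarith [sq_nonneg y]

lemma abs_bandMap_iterate_le_two (T : IsBandMerging t) {y : ℝ} (hy : |y| ≤ t) (n : ℕ) :
    |(bandMap t)^[n] y| ≤ 2 := by
  rcases Nat.even_or_odd' n with ⟨m, rfl | rfl⟩
  · rw [← bandReturn_iterate]
    linarith [T.abs_bandReturn_iterate_le hy m, T.lt]
  · rw [Function.iterate_succ_apply', ← bandReturn_iterate]
    exact T.abs_bandMap_le_two (T.abs_bandReturn_iterate_le hy m)

lemma exists_exp_le_mul_abs_deriv (T : IsBandMerging t) {z : ℝ}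
    (hz : ∀ n, (bandReturn t)^[n] z ∈ lap t (blockWord n)) :
    ∃ κ > 0, ∃ C > 0, ∀ n : ℕ, Real.exp (κ * n) ≤ C * |deriv (bandMap t)^[n] z| := by
  have hκ : 0 < Real.log (6 / 5) / 2 := half_pos (Real.log_pos (by norm_num))
  refine ⟨_, hκ, (4 / 3) ^ 22 * 4, by positivity,
    exp_le_mul_abs_deriv_iterate (hasDerivAt_bandMap t) hκ.le (by positivity) (by norm_num)
      (fun n => ?_) fun m => ?_⟩
  · have hz₀ : |z| ≤ t := abs_le_of_mem_lap (hz 0)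
    rw [abs_mul, abs_two]
    linarith [T.abs_bandMap_iterate_le_two hz₀ n]
  · rw [mul_div_cancel₀ _ two_ne_zero, mul_comm, Real.exp_nat_mul, Real.exp_log (by norm_num)]
    exact T.pow_le_mul_abs_deriv hz m

end IsBandMerging

/-! ### Strange attractors of skew products -/

/-- A strange attractor on the line: the attractor `I` of the trapping interval `(a, b)`, reached
after finitely many steps, which contains a Collet–Eckmann point with dense orbit. -/
structure IsStrangeInterval (g : ℝ → ℝ) (a b : ℝ) (I : Set ℝ) : Prop where
  mapsTo : MapsTo g (Icc a b) (Ioo a b)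
  subset : I ⊆ Ioo a b
  subset_image : I ⊆ g '' I
  exists_mapsTo : ∃ m, MapsTo g^[m] (Icc a b) I
  exists_colletEckmann : ∃ z ∈ I, I ⊆ closure (range fun n => g^[n] z) ∧
    ∃ κ > 0, ∃ C > 0, ∀ n : ℕ, Real.exp (κ * n) ≤ C * |deriv g^[n] z|

section SkewProduct

variable {p : ℝ → ℝ} {q : ℝ → ℝ → ℝ} {x₀ a b θ ε : ℝ} {I : Set ℝ}

lemma skewProduct_iterate_mk (hp : p x₀ = x₀) (n : ℕ) (y : ℝ) :
    (skewProduct p q)^[n] (x₀, y) = (x₀, (q x₀)^[n] y) := by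
  refine (Function.Semiconj.iterate_right (f := Prod.mk x₀) (ga := q x₀) (fun y => ?_) n y).symm
  rw [skewProduct, hp]

lemma exists_closedBall_forall_mapsTo (hq : Continuous fun z : ℝ × ℝ => q z.1 z.2)
    (hmaps : MapsTo (q x₀) (Icc a b) (Ioo a b)) {P : ℝ → Prop} (hP : ∀ᶠ x in 𝓝 x₀, P x) :
    ∃ ε > 0, ∀ x ∈ Metric.closedBall x₀ ε, P x ∧ MapsTo (q x) (Icc a b) (Ioo a b) := by
  refine Metric.nhds_basis_closedBall.eventually_iff.mp (hP.and ?_)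
  exact isCompact_Icc.eventually_forall_of_forall_eventually fun y hy =>
    hq.continuousAt.eventually_mem (isOpen_Ioo.mem_nhds (hmaps hy))

lemma mapsTo_skewProduct (hε : 0 < ε) (hθ : θ < 1)
    (hp : ∀ x ∈ Metric.closedBall x₀ ε, |p x - x₀| ≤ θ * |x - x₀|)
    (hq : ∀ x ∈ Metric.closedBall x₀ ε, MapsTo (q x) (Icc a b) (Ioo a b)) :
    MapsTo (skewProduct p q) (Metric.closedBall x₀ ε ×ˢ Icc a b) (Metric.ball x₀ ε ×ˢ Ioo a b) := by
  rintro ⟨x, y⟩ ⟨hx, hy⟩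
  refine ⟨?_, hq x hx hy⟩
  have hle := hp x hx
  rw [Metric.mem_closedBall, Real.dist_eq] at hx
  rw [Metric.mem_ball, Real.dist_eq, skewProduct]
  rcases (abs_nonneg (x - x₀)).eq_or_lt with hzero | hpos
  · rw [← hzero, mul_zero] at hle
    exact hle.trans_lt hε
  · exact (hle.trans_lt (mul_lt_of_lt_one_left hpos hθ)).trans_le hx

lemma abs_fst_skewProduct_iterate_sub_le (hθ : 0 ≤ θ) {U : Set (ℝ × ℝ)}
    (hU : MapsTo (skewProduct p q) U U) (hp : ∀ z ∈ U, |p z.1 - x₀| ≤ θ * |z.1 - x₀|)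
    {z : ℝ × ℝ} (hz : z ∈ U) (n : ℕ) :
    |((skewProduct p q)^[n] z).1 - x₀| ≤ θ ^ n * |z.1 - x₀| := by
  induction n with
  | zero => simp
  | succ n ih =>
    rw [Function.iterate_succ_apply']
    calc _ ≤ θ * |((skewProduct p q)^[n] z).1 - x₀| := hp _ (hU.iterate n hz)
      _ ≤ θ * (θ ^ n * |z.1 - x₀|) := mul_le_mul_of_nonneg_left ih hθ
      _ = θ ^ (n + 1) * |z.1 - x₀| := by ring

lemma fst_eq_of_skewProduct_iterate_fst_eq {U : Set (ℝ × ℝ)} (hU : MapsTo (skewProduct p q) U U)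
    (hp : ∀ z ∈ U, p z.1 = x₀ → z.1 = x₀) {z : ℝ × ℝ} (hz : z ∈ U) {n : ℕ}
    (hn : ((skewProduct p q)^[n] z).1 = x₀) : z.1 = x₀ := by
  induction n generalizing z with
  | zero => exact hn
  | succ n ih => exact hp z hz (ih (hU hz) hn)

lemma IsStrangeInterval.iInter_image_eq (hI : IsStrangeInterval (q x₀) a b I) (hp₀ : p x₀ = x₀)
    (hθ₀ : 0 ≤ θ) (hθ₁ : θ < 1) (hε : 0 < ε)
    (hp : ∀ x ∈ Metric.closedBall x₀ ε, |p x - x₀| ≤ θ * |x - x₀| ∧ (p x = x₀ → x = x₀))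
    (hU : MapsTo (skewProduct p q) (Metric.ball x₀ ε ×ˢ Ioo a b) (Metric.ball x₀ ε ×ˢ Ioo a b)) :
    ⋂ n : ℕ, (skewProduct p q)^[n] '' (Metric.ball x₀ ε ×ˢ Ioo a b) = {x₀} ×ˢ I := by
  refine subset_antisymm (fun w hw => ?_) (subset_iInter fun n => ?_)
  · rw [mem_iInter] at hw
    have hpU := fun (z : ℝ × ℝ) (hz : z ∈ Metric.ball x₀ ε ×ˢ Ioo a b) =>
      hp z.1 (Metric.ball_subset_closedBall hz.1)
    have hle : ∀ n, |w.1 - x₀| ≤ θ ^ n * ε := fun n => by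
      obtain ⟨z, hz, rfl⟩ := hw n
      exact (abs_fst_skewProduct_iterate_sub_le hθ₀ hU (fun z hz => (hpU z hz).1) hz n).trans
        (mul_le_mul_of_nonneg_left (Real.dist_eq z.1 x₀ ▸ (Metric.mem_ball.mp hz.1).le)
          (pow_nonneg hθ₀ n))
    have hlim : Tendsto (fun n => θ ^ n * ε) atTop (𝓝 0) := by
      simpa using (tendsto_pow_atTop_nhds_zero_of_lt_one hθ₀ hθ₁).mul_const ε
    have hfst : w.1 = x₀ := sub_eq_zero.mp (abs_nonpos_iff.mp (ge_of_tendsto' hlim hle))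
    obtain ⟨m, hm⟩ := hI.exists_mapsTo
    obtain ⟨⟨x, y⟩, hz, rfl⟩ := hw m
    obtain rfl : x = x₀ :=
      fst_eq_of_skewProduct_iterate_fst_eq hU (fun z hz => (hpU z hz).2) hz hfst
    rw [skewProduct_iterate_mk hp₀]
    exact ⟨rfl, hm (Ioo_subset_Icc_self hz.2)⟩
  · have hsub : ∀ n, I ⊆ (q x₀)^[n] '' I := fun n => by
      induction n with
      | zero => simp
      | succ n ih =>
        rw [Function.iterate_succ, image_comp]
        exact ih.trans (image_mono hI.subset_image)
    rintro ⟨x, y⟩ ⟨hx, hy⟩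
    obtain rfl : x = x₀ := hx
    obtain ⟨y', hy', rfl⟩ := hsub n hy
    exact ⟨(x, y'), ⟨Metric.mem_ball_self hε, hI.subset hy'⟩, skewProduct_iterate_mk hp₀ n y'⟩

lemma hasDerivAt_mk_iterate (hp : p x₀ = x₀) (hF : Differentiable ℝ (skewProduct p q)) (n : ℕ)
    (y : ℝ) : HasDerivAt (q x₀)^[n] (fderiv ℝ (skewProduct p q)^[n] (x₀, y) (0, 1)).2 y := by
  have hvert : HasDerivAt (fun y => (x₀, y)) ((0 : ℝ), (1 : ℝ)) y :=
    (hasDerivAt_const y x₀).prodMk (hasDerivAt_id y)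
  have hcomp := hasFDerivAt_snd.comp_hasDerivAt y
    (((hF.iterate n) (x₀, y)).hasFDerivAt.comp_hasDerivAt y hvert)
  simpa [Function.comp_def, skewProduct_iterate_mk hp] using hcomp

lemma le_norm_fderiv_skewProduct_iterate (hp : p x₀ = x₀)
    (hF : Differentiable ℝ (skewProduct p q)) (n : ℕ) (y C : ℝ) :
    C * |deriv (q x₀)^[n] y| ≤ ‖fderiv ℝ (skewProduct p q)^[n] (x₀, y) (0, C)‖ := by
  rw [(hasDerivAt_mk_iterate hp hF n y).deriv, show ((0 : ℝ), C) = C • (0, 1) by simp, map_smul,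
    norm_smul, ← Real.norm_eq_abs]
  exact mul_le_mul (Real.le_norm_self C) (norm_snd_le _) (norm_nonneg _) (norm_nonneg _)

lemma IsStrangeInterval.isStrangeAttractor (hI : IsStrangeInterval (q x₀) a b I)
    (hF : Differentiable ℝ (skewProduct p q)) (hp₀ : p x₀ = x₀) (hθ₀ : 0 ≤ θ) (hθ₁ : θ < 1)
    (hp : ∀ᶠ x in 𝓝 x₀, |p x - x₀| ≤ θ * |x - x₀| ∧ (p x = x₀ → x = x₀)) :
    IsStrangeAttractor (skewProduct p q) ({x₀} ×ˢ I) := by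
  obtain ⟨ε, hε, hbox⟩ := exists_closedBall_forall_mapsTo hF.continuous.snd hI.mapsTo hp
  have hKU := mapsTo_skewProduct hε hθ₁ (fun x hx => (hbox x hx).1.1) fun x hx => (hbox x hx).2
  have hUK := prod_mono (Metric.ball_subset_closedBall (x := x₀) (ε := ε))
    (Ioo_subset_Icc_self (a := a) (b := b))
  obtain ⟨y, hy, hdense, κ, hκ, C, hC, hexp⟩ := hI.exists_colletEckmann
  refine ⟨Metric.ball x₀ ε ×ˢ Ioo a b, Metric.isOpen_ball.prod isOpen_Ioo, ?_,
    (hI.iInter_image_eq hp₀ hθ₀ hθ₁ hε (fun x hx => (hbox x hx).1) (hKU.mono_left hUK)).symm,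
    (x₀, y), ⟨rfl, hy⟩, ?_, (0, C), fun h => hC.ne' (congrArg Prod.snd h), κ, hκ, fun n _ =>
      (hexp n).trans (le_norm_fderiv_skewProduct_iterate hp₀ hF n y C)⟩
  · have hcompact := ((isCompact_closedBall x₀ ε).prod (isCompact_Icc (a := a) (b := b))).image
      hF.continuous
    exact (closure_minimal (image_mono hUK) hcompact.isClosed).trans hKU.image_subset
  · rintro ⟨x, u⟩ ⟨hx, hu⟩
    obtain rfl : x = x₀ := hx
    simp only [skewProduct_iterate_mk hp₀]
    refine map_mem_closure (f := fun u => (x, u)) (by fun_prop) (hdense hu) ?_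
    rintro _ ⟨n, rfl⟩
    exact ⟨n, rfl⟩

end SkewProduct

/-! ### Fibre maps -/

/-- The fibre maps of the example. With `c = x ^ (2 * N)`, they interpolate between `bandMap t` at
`c = 1` and, at `c = 0`, a cubic map having the two roots `-t` and `1 + t` of
`y ^ 2 - y - t - t ^ 2` as superattracting fixed points. -/
noncomputable def fibreMap (t : ℝ) (N : ℕ) (x y : ℝ) : ℝ :=
  y + (y ^ 2 - y - t - t ^ 2) * (x ^ (2 * N) + (1 - x ^ (2 * N)) * (1 - 2 * y) / (1 + 2 * t) ^ 2)

lemma fibreMap_one (t : ℝ) (N : ℕ) : fibreMap t N 1 = bandMap t := by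
  funext y
  simp only [fibreMap, bandMap, one_pow]
  ring

lemma fibreMap_neg (t : ℝ) (N : ℕ) (x : ℝ) : fibreMap t N x (-t) = -t := by
  unfold fibreMap; ring

lemma fibreMap_one_add (t : ℝ) (N : ℕ) (x : ℝ) : fibreMap t N x (1 + t) = 1 + t := by
  unfold fibreMap; ring

lemma differentiable_skewProduct_fibreMap (r t : ℝ) (N : ℕ) :
    Differentiable ℝ (skewProduct (quartic r) (fibreMap t N)) := by
  unfold skewProduct quartic fibreMap
  fun_prop

lemma fibreMap_sub_eq {t a : ℝ} (ha : a ^ 2 - a = t + t ^ 2) (ht : 1 + 2 * t ≠ 0) (N : ℕ)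
    (x y : ℝ) : fibreMap t N x y - a = ((1 - x ^ (2 * N)) *
      (3 * ((y - a) / (1 - 2 * a)) - 2 * ((y - a) / (1 - 2 * a)) ^ 2) +
        x ^ (2 * N) * (y + a)) * (y - a) := by
  have hsq : (1 + 2 * t) ^ 2 = (1 - 2 * a) ^ 2 := by linear_combination -4 * ha
  have hne : 1 - 2 * a ≠ 0 := fun h => pow_ne_zero 2 ht (by rw [hsq, h]; norm_num)
  rw [fibreMap, hsq, show y ^ 2 - y - t - t ^ 2 = (y - a) * (y + a - 1) by linear_combination ha]
  set m := 1 - 2 * a with hm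
  rw [show a = (1 - m) / 2 by rw [hm]; ring]
  field_simp
  ring

lemma IsBandMerging.abs_fibreMap_sub_le {t a : ℝ} (T : IsBandMerging t)
    (ha : a ^ 2 - a = t + t ^ 2) {N : ℕ} {x y : ℝ} (hx : x ^ (2 * N) ≤ 1 / 20)
    (hy : |y - a| < 1 / 10) : |fibreMap t N x y - a| ≤ 1 / 2 * |y - a| := by
  have hgt := T.gt
  have hlt := T.lt
  have hm : |1 - 2 * a| = 1 + 2 * t := by
    rw [← abs_of_pos (show 0 < 1 + 2 * t by linarith), ← sq_eq_sq_iff_abs_eq_abs]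
    linear_combination 4 * ha
  have hc : 0 ≤ x ^ (2 * N) := (even_two_mul N).pow_nonneg x
  rw [fibreMap_sub_eq ha (by linarith), abs_mul]
  refine mul_le_mul_of_nonneg_right ?_ (abs_nonneg _)
  have hu : |(y - a) / (1 - 2 * a)| ≤ 1 / 26 := by
    rw [abs_div, hm, div_le_iff₀ (by linarith)]
    linarith
  have hya : |y + a| ≤ 4 := by
    rw [abs_lt] at hy
    rw [abs_eq (by linarith)] at hm
    exact abs_le.mpr ⟨by rcases hm with h | h <;> linarith, by rcases hm with h | h <;> linarith⟩
  set u := (y - a) / (1 - 2 * a)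
  set c := x ^ (2 * N)
  rw [abs_le] at hu hya ⊢
  constructor <;> nlinarith

/-! ### The strange attractor of the fibre over `1` -/

lemma eventually_abs_quartic_sub_one_le {r : ℝ} (hr : r ≠ 0) :
    ∀ᶠ x in 𝓝 1, |quartic r x - 1| ≤ 1 / 2 * |x - 1| ∧ (quartic r x = 1 → x = 1) := by
  have hsub : ∀ x, quartic r x - 1 = -r * (1 + x) ^ 2 * (x - 1) * (x - 1) := fun x => by
    unfold quartic; ring
  have hsmall : ∀ᶠ x in 𝓝 (1 : ℝ), |-r * (1 + x) ^ 2 * (x - 1)| < 1 / 2 :=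
    ContinuousAt.eventually_lt (by fun_prop) continuousAt_const (by norm_num)
  filter_upwards [hsmall, lt_mem_nhds (show (-1 : ℝ) < 1 by norm_num)] with x hx hpos
  refine ⟨?_, fun h => ?_⟩
  · rw [hsub, abs_mul]
    exact mul_le_mul_of_nonneg_right hx.le (abs_nonneg _)
  · have hzero := hsub x
    have hne : 1 + x ≠ 0 := by linarith
    simpa [h, hr, hne, sub_eq_zero] using hzero

namespace IsBandMerging

variable {t : ℝ}

lemma bandMap_neg_sub_sq (T : IsBandMerging t) : bandMap t (-t - t ^ 2) = t := by
  unfold bandMap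
  linear_combination t * T.eq_two

lemma Icc_subset_image_bandMap (T : IsBandMerging t) :
    Icc (-t - t ^ 2) t ⊆ bandMap t '' Icc (-t - t ^ 2) t := by
  have hsurj := intermediate_value_Icc' (show -t - t ^ 2 ≤ 0 by nlinarith [T.pos])
    (continuous_bandMap t).continuousOn
  rw [T.bandMap_neg_sub_sq, show bandMap t 0 = -t - t ^ 2 by unfold bandMap; ring] at hsurj
  exact hsurj.trans (image_mono (Icc_subset_Icc_right T.pos.le))

lemma mapsTo_bandMap (T : IsBandMerging t) {δ ε : ℝ} (hε : ε ≤ t ^ 2 + δ) :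
    MapsTo (bandMap t) (Icc (-t - t ^ 2 - δ) (t + ε))
      (Icc (-t - t ^ 2) (t + (2 * (t + t ^ 2) + δ) * δ)) := by
  intro y hy
  have hmin := T.bandMap_neg_sub_sq
  have hsq : y ^ 2 ≤ (t + t ^ 2 + δ) ^ 2 :=
    sq_le_sq' (by linarith [hy.1]) (by linarith [hy.2])
  unfold bandMap at hmin ⊢
  exact ⟨by linarith [sq_nonneg y], by linarith⟩

lemma isStrangeInterval (T : IsBandMerging t) :
    IsStrangeInterval (bandMap t) (-t - t ^ 2 - 1 / 100) (t + 1 / 10) (Icc (-t - t ^ 2) t) := by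
  have hgt := T.gt
  have hlt := T.lt
  have hfirst : MapsTo (bandMap t) (Icc (-t - t ^ 2 - 1 / 100) (t + 1 / 10))
      (Icc (-t - t ^ 2) (t + 1 / 20)) :=
    (T.mapsTo_bandMap (by nlinarith)).mono_right (Icc_subset_Icc_right (by nlinarith))
  have hsecond : MapsTo (bandMap t) (Icc (-t - t ^ 2) (t + 1 / 20)) (Icc (-t - t ^ 2) t) := by
    simpa using T.mapsTo_bandMap (show 1 / 20 ≤ t ^ 2 + 0 by nlinarith)
  obtain ⟨z, hz⟩ := T.exists_itinerary blockWord
  refine ⟨hfirst.mono_right (Icc_subset_Ioo (by linarith) (by linarith)),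
    Icc_subset_Ioo (by linarith) (by linarith), T.Icc_subset_image_bandMap,
    ⟨2, hsecond.comp hfirst⟩, z, ?_,
    T.Icc_subset_closure_range_iterate isUniversalWord_blockWord hz,
    T.exists_exp_le_mul_abs_deriv hz⟩
  have habs : -t ≤ z ∧ z ≤ t := abs_le.mp (abs_le_of_mem_lap (hz 0))
  exact ⟨by linarith [habs.1, sq_nonneg t], habs.2⟩

end IsBandMerging

/-! ### Polynomiality -/

section Polynomial

open MvPolynomial

lemma two_le_totalDegree_quartic {r : ℝ} (hr : r ≠ 0) :
    2 ≤ (1 - C r * (1 - X 0 ^ 2) ^ 2 : MvPolynomial (Fin 2) ℝ).totalDegree := by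
  have hexpand : (1 - C r * (1 - X 0 ^ 2) ^ 2 : MvPolynomial (Fin 2) ℝ) =
      C (1 - r) + C (2 * r) * X 0 ^ 2 - C r * X 0 ^ 4 := by
    simp only [map_sub, map_mul, map_one, map_ofNat]
    ring
  have hmem : Finsupp.single 0 2 ∈
      (1 - C r * (1 - X 0 ^ 2) ^ 2 : MvPolynomial (Fin 2) ℝ).support := by
    rw [hexpand, mem_support_iff, coeff_sub, coeff_add, coeff_C_mul, coeff_C_mul, coeff_C]
    simp [coeff_X_pow, (Finsupp.single_injective _).eq_iff, eq_comm (a := (0 : Fin 2 →₀ ℕ)), hr]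
  simpa using le_totalDegree hmem

lemma isPolyMapDegTwo_skewProduct {r : ℝ} (hr : r ≠ 0) (t : ℝ) (N : ℕ) :
    IsPolyMapDegTwo (skewProduct (quartic r) (fibreMap t N)) := by
  refine ⟨1 - C r * (1 - X 0 ^ 2) ^ 2,
    X 1 + (X 1 ^ 2 - X 1 - C t - C t ^ 2) * (X 0 ^ (2 * N) +
      (1 - X 0 ^ (2 * N)) * (1 - 2 * X 1) * C ((1 + 2 * t) ^ 2)⁻¹),
    le_max_of_le_left (two_le_totalDegree_quartic hr), fun z => ?_⟩
  simp [skewProduct, quartic, fibreMap, div_eq_mul_inv]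

end Polynomial

lemma IsRenormTower.exists_forall_pow_le {r : ℝ} {b : ℕ → ℝ} (T : IsRenormTower r b) {ε : ℝ}
    (hε : 0 < ε) : ∃ N : ℕ, ∀ x, |x| < b 0 → x ^ (2 * N) ≤ ε := by
  obtain ⟨N, hN⟩ := exists_pow_lt_of_lt_one hε
    (pow_lt_one₀ (T.pos 0).le T.zero_lt_one two_ne_zero)
  refine ⟨N, fun x hx => ?_⟩
  calc x ^ (2 * N) = (|x| ^ 2) ^ N := by rw [sq_abs, pow_mul]
    _ ≤ (b 0 ^ 2) ^ N := by gcongr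
    _ ≤ ε := hN.le

/-- There exists a polynomial map `f : ℝ² → ℝ²` of degree at least 2 having two disjoint
period doubling Cantor attractors and a strange attractor. -/
theorem exists_polyMap_with_two_PD_attractors_and_strange_attractor :
    ∃ f : ℝ × ℝ → ℝ × ℝ, IsPolyMapDegTwo f ∧
      (∃ A B : Set (ℝ × ℝ), IsPDCantorAttractor f A ∧ IsPDCantorAttractor f B ∧
        Disjoint A B) ∧
      ∃ Λ : Set (ℝ × ℝ), IsStrangeAttractor f Λ := by
  obtain ⟨r, hr⟩ := exists_isInfinitelyRenormalizable
  obtain ⟨b, R⟩ := hr.exists_isRenormTower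
  obtain ⟨t, T⟩ := exists_isBandMerging
  obtain ⟨N, hN⟩ := R.exists_forall_pow_le (show (0 : ℝ) < 1 / 20 by norm_num)
  have hPD : ∀ a, a ^ 2 - a = t + t ^ 2 → (∀ x, fibreMap t N x a = a) →
      IsPDCantorAttractor (skewProduct (quartic r) (fibreMap t N))
        (range fun x => (R.isAddingMachineTower.code x, a)) := fun a ha hfix =>
    R.isPDCantorAttractor (δ := 1 / 10) (θ := 1 / 2) (by norm_num) (by norm_num) (by norm_num)
      hfix fun x y hx hy => T.abs_fibreMap_sub_le ha (hN x hx) hy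
  refine ⟨skewProduct (quartic r) (fibreMap t N), isPolyMapDegTwo_skewProduct R.ne_zero t N,
    ⟨_, _, hPD (-t) (by ring) (fibreMap_neg t N), hPD (1 + t) (by ring) (fibreMap_one_add t N), ?_⟩,
    {1} ×ˢ Icc (-t - t ^ 2) t, ?_⟩
  · rw [disjoint_range_iff]
    exact fun x y h => absurd (congrArg Prod.snd h) (by linarith [T.pos])
  · exact (fibreMap_one t N ▸ T.isStrangeInterval).isStrangeAttractor
      (differentiable_skewProduct_fibreMap r t N) (by simp [quartic]) one_half_pos.le
      one_half_lt_one (eventually_abs_quartic_sub_one_le R.ne_zero)
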